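/- arXiv:2605.04438 — 2 statements merged into one kernel-verified Lean document; each statement's English description precedes it below -/
import Mathlib

section
/- For n even, n ≥ 4, if G is an n-vertex graph that is not matching covered, then ρ(G) ≤ ρ(H_{n,3}), with equality if and only if G ≅ H_{n,3}. -/
open SimpleGraph Finset
open scoped Classical

lemma adjMatrix_isHermitian {V : Type*} [Fintype V] (G : SimpleGraph V)
    [DecidableRel G.Adj] : (G.adjMatrix ℝ).IsHermitian := by
  ext i j
  simp [Matrix.conjTranspose_apply, SimpleGraph.adjMatrix_apply, SimpleGraph.adj_comm]

/-- The spectral radius of a graph: the largest eigenvalue of its adjacency matrix. -/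
noncomputable def specRad {n : ℕ} (G : SimpleGraph (Fin n)) : ℝ := by
  classical
  exact ⨆ i, (adjMatrix_isHermitian G).eigenvalues i

/-- H_{n,γ}: vertex 0 is joined to the γ-1 vertices 1,…,γ-1; vertices 1,…,n-1 form a
clique.  Thus Hgraph n γ = K_{γ-1} ∨ (K_{n-γ} ∪ K_1). -/
def Hgraph (n γ : ℕ) : SimpleGraph (Fin n) :=
  SimpleGraph.fromRel (fun u v =>
    (0 < u.val ∧ 0 < v.val) ∨ (u.val = 0 ∧ 0 < v.val ∧ v.val < γ))

/-- G is matching covered: every edge lies in some perfect matching. -/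
def IsMatchingCovered {V : Type*} (G : SimpleGraph V) : Prop :=
  ∀ e ∈ G.edgeSet, ∃ M : G.Subgraph, M.IsPerfectMatching ∧ e ∈ M.edgeSet

open scoped Pointwise in
lemma Matrix.IsHermitian.posSemidef_smul_one_sub {ι : Type*} [Fintype ι] [DecidableEq ι]
    {A : Matrix ι ι ℝ} (hA : A.IsHermitian) {r : ℝ} (h : ∀ i, hA.eigenvalues i ≤ r) :
    (r • (1 : Matrix ι ι ℝ) - A).PosSemidef := by
  have hB : (r • (1 : Matrix ι ι ℝ) - A).IsHermitian :=
    (Matrix.isHermitian_one.smul (by simp [IsSelfAdjoint])).sub hA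
  rw [hB.posSemidef_iff_eigenvalues_nonneg]
  intro j
  have hj := hB.eigenvalues_mem_spectrum_real j
  have hs : spectrum ℝ (r • (1 : Matrix ι ι ℝ) - A) = ({r} : Set ℝ) - spectrum ℝ A := by
    rw [← Algebra.algebraMap_eq_smul_one, ← spectrum.singleton_sub_eq]
  rw [hs] at hj
  obtain ⟨a, ha, b, hb, hab⟩ := Set.mem_sub.1 hj
  rw [hA.spectrum_real_eq_range_eigenvalues] at hb
  obtain ⟨i, rfl⟩ := hb
  rw [Set.mem_singleton_iff] at ha
  subst ha
  simp only [Pi.zero_apply]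
  rw [← hab]
  linarith [h i]

lemma specRad_eq_iSup {n : ℕ} (G : SimpleGraph (Fin n)) [DecidableRel G.Adj] :
    specRad G = ⨆ i, (adjMatrix_isHermitian G).eigenvalues i := by
  unfold specRad
  congr!

lemma adjMatrix_mulVec_eq_sum_ite {n : ℕ} (G : SimpleGraph (Fin n)) [DecidableRel G.Adj]
    (x : Fin n → ℝ) (v : Fin n) :
    (G.adjMatrix ℝ).mulVec x v = ∑ w, if G.Adj v w then x w else 0 := by
  simp [Matrix.mulVec, dotProduct, SimpleGraph.adjMatrix_apply]

lemma exists_eigenvector_specRad {n : ℕ} (hn : 0 < n) (G : SimpleGraph (Fin n)) :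
    ∃ x : Fin n → ℝ, x ≠ 0 ∧
      ∀ v, (∑ w, if G.Adj v w then x w else 0) = specRad G * x v := by
  have : Nonempty (Fin n) := ⟨⟨0, hn⟩⟩
  obtain ⟨i, hi⟩ := exists_eq_ciSup_of_finite (f := (adjMatrix_isHermitian G).eigenvalues)
  have hm := (adjMatrix_isHermitian G).mulVec_eigenvectorBasis i
  refine ⟨⇑((adjMatrix_isHermitian G).eigenvectorBasis i), ?_, fun v => ?_⟩
  · intro h0
    apply (adjMatrix_isHermitian G).eigenvectorBasis.orthonormal.ne_zero i
    ext v
    exact congrFun h0 v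
  · rw [← adjMatrix_mulVec_eq_sum_ite, hm, specRad_eq_iSup, ← hi]
    simp

lemma posSemidef_specRad_smul_one_sub {n : ℕ} (G : SimpleGraph (Fin n)) :
    (specRad G • (1 : Matrix (Fin n) (Fin n) ℝ) - G.adjMatrix ℝ).PosSemidef := by
  apply (adjMatrix_isHermitian G).posSemidef_smul_one_sub
  intro i
  rw [specRad_eq_iSup]
  exact le_ciSup (Set.finite_range _).bddAbove i

lemma dotProduct_specRad_smul_one_sub_mulVec {n : ℕ} (G : SimpleGraph (Fin n))
    (x : Fin n → ℝ) :
    star x ⬝ᵥ ((specRad G • (1 : Matrix (Fin n) (Fin n) ℝ) - G.adjMatrix ℝ).mulVec x) =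
      specRad G * ∑ v, x v ^ 2 - ∑ v, x v * ∑ w, if G.Adj v w then x w else 0 := by
  simp only [← adjMatrix_mulVec_eq_sum_ite]
  rw [Matrix.sub_mulVec, Matrix.smul_mulVec, Matrix.one_mulVec, dotProduct_sub,
    dotProduct_smul, star_trivial]
  simp only [dotProduct, smul_eq_mul, sq]

lemma rayleigh_le_specRad {n : ℕ} (G : SimpleGraph (Fin n)) (x : Fin n → ℝ) :
    (∑ v, x v * ∑ w, if G.Adj v w then x w else 0) ≤ specRad G * ∑ v, x v ^ 2 := by
  have h := (posSemidef_specRad_smul_one_sub G).dotProduct_mulVec_nonneg x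
  rw [dotProduct_specRad_smul_one_sub_mulVec] at h
  linarith

lemma eigenvector_of_rayleigh_eq {n : ℕ} (G : SimpleGraph (Fin n)) (x : Fin n → ℝ)
    (h : (∑ v, x v * ∑ w, if G.Adj v w then x w else 0) = specRad G * ∑ v, x v ^ 2)
    (v : Fin n) : (∑ w, if G.Adj v w then x w else 0) = specRad G * x v := by
  have h0 := (posSemidef_specRad_smul_one_sub G).dotProduct_mulVec_zero_iff x
  rw [dotProduct_specRad_smul_one_sub_mulVec, h, sub_self] at h0
  have := congrFun (h0.1 rfl) v
  rw [Matrix.sub_mulVec, Matrix.smul_mulVec, Matrix.one_mulVec] at this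
  simp only [Pi.sub_apply, Pi.smul_apply, smul_eq_mul, Pi.zero_apply,
    adjMatrix_mulVec_eq_sum_ite] at this
  linarith

/-- A positive vector `y` with `A y < c y` entrywise bounds the spectral radius by `c`. -/
lemma specRad_lt_of_forall_sum_lt {n : ℕ} (hn : 0 < n) (G : SimpleGraph (Fin n)) {c : ℝ}
    (y : Fin n → ℝ) (hy : ∀ v, 0 < y v)
    (h : ∀ v, (∑ w, if G.Adj v w then y w else 0) < c * y v) : specRad G < c := by
  obtain ⟨x, hx0, hx⟩ := exists_eigenvector_specRad hn G
  obtain ⟨u, hu⟩ := Function.ne_iff.1 hx0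
  have hle : specRad G * ∑ v, |x v| * y v ≤ ∑ v, |x v| * ∑ w, if G.Adj v w then y w else 0 := by
    calc specRad G * ∑ v, |x v| * y v = ∑ v, (specRad G * |x v|) * y v := by
          rw [Finset.mul_sum]; exact Finset.sum_congr rfl fun _ _ => by ring
      _ ≤ ∑ v, (∑ w, if G.Adj v w then |x w| else 0) * y v := by
          refine Finset.sum_le_sum fun v _ => mul_le_mul_of_nonneg_right ?_ (hy v).le
          calc specRad G * |x v| ≤ |specRad G * x v| := by
                rw [abs_mul]; exact mul_le_mul_of_nonneg_right (le_abs_self _) (abs_nonneg _)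
            _ = |∑ w, if G.Adj v w then x w else 0| := by rw [hx]
            _ ≤ ∑ w, |if G.Adj v w then x w else 0| := Finset.abs_sum_le_sum_abs _ _
            _ = _ := Finset.sum_congr rfl fun w _ => by split_ifs <;> simp
      _ = _ := by
          simp only [Finset.sum_mul, Finset.mul_sum]
          rw [Finset.sum_comm]
          refine Finset.sum_congr rfl fun v _ => Finset.sum_congr rfl fun w _ => ?_
          simp only [G.adj_comm w v]
          split_ifs <;> ring
  have hlt : (∑ v, |x v| * ∑ w, if G.Adj v w then y w else 0) < c * ∑ v, |x v| * y v := by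
    rw [Finset.mul_sum]
    refine Finset.sum_lt_sum (fun v _ => ?_) ⟨u, Finset.mem_univ u, ?_⟩
    · nlinarith [mul_le_mul_of_nonneg_left (h v).le (abs_nonneg (x v))]
    · nlinarith [mul_lt_mul_of_pos_left (h u) (abs_pos.2 hu)]
  have hpos : 0 ≤ ∑ v, |x v| * y v :=
    Finset.sum_nonneg fun v _ => mul_nonneg (abs_nonneg _) (hy v).le
  exact lt_of_mul_lt_mul_right (hle.trans_lt hlt) hpos

/-- The absolute value of a top eigenvector attains the spectral radius as Rayleigh quotient. -/
lemma exists_nonneg_specRad_mul_le {n : ℕ} (hn : 0 < n) (G : SimpleGraph (Fin n)) :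
    ∃ z : Fin n → ℝ, (∀ v, 0 ≤ z v) ∧ 0 < ∑ v, z v ^ 2 ∧
      specRad G * ∑ v, z v ^ 2 ≤ ∑ v, z v * ∑ w, if G.Adj v w then z w else 0 := by
  obtain ⟨x, hx0, hx⟩ := exists_eigenvector_specRad hn G
  obtain ⟨u, hu⟩ := Function.ne_iff.1 hx0
  refine ⟨fun v => |x v|, fun v => abs_nonneg _, ?_, ?_⟩
  · exact Finset.sum_pos' (fun _ _ => by positivity)
      ⟨u, Finset.mem_univ u, pow_pos (abs_pos.2 hu) 2⟩
  · rw [Finset.mul_sum]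
    refine Finset.sum_le_sum fun v _ => ?_
    calc specRad G * |x v| ^ 2 = x v * ∑ w, if G.Adj v w then x w else 0 := by
          rw [hx, sq_abs]; ring
      _ ≤ |x v| * |∑ w, if G.Adj v w then x w else 0| := by
          rw [← abs_mul]; exact le_abs_self _
      _ ≤ _ := by
          refine mul_le_mul_of_nonneg_left ?_ (abs_nonneg _)
          refine (Finset.abs_sum_le_sum_abs _ _).trans_eq ?_
          exact Finset.sum_congr rfl fun w _ => by split_ifs <;> simp

lemma ite_adj_le_ite_adj {n : ℕ} {G H : SimpleGraph (Fin n)} (h : G ≤ H)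
    {z : Fin n → ℝ} (hz : ∀ v, 0 ≤ z v) (v w : Fin n) :
    (if G.Adj v w then z w else 0) ≤ if H.Adj v w then z w else 0 := by
  by_cases hG : G.Adj v w
  · simp [hG, h hG]
  · simp only [hG, if_false]
    split_ifs
    exacts [hz w, le_rfl]

lemma sum_mul_sum_ite_adj_le {n : ℕ} {G H : SimpleGraph (Fin n)} (h : G ≤ H)
    {z : Fin n → ℝ} (hz : ∀ v, 0 ≤ z v) :
    (∑ v, z v * ∑ w, if G.Adj v w then z w else 0) ≤
      ∑ v, z v * ∑ w, if H.Adj v w then z w else 0 :=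
  Finset.sum_le_sum fun v _ => mul_le_mul_of_nonneg_left
    (Finset.sum_le_sum fun w _ => ite_adj_le_ite_adj h hz v w) (hz v)

lemma specRad_mono {n : ℕ} (hn : 0 < n) {G H : SimpleGraph (Fin n)} (h : G ≤ H) :
    specRad G ≤ specRad H := by
  obtain ⟨z, hz, hpos, hle⟩ := exists_nonneg_specRad_mul_le hn G
  exact le_of_mul_le_mul_right
    ((hle.trans (sum_mul_sum_ite_adj_le h hz)).trans (rayleigh_le_specRad H z)) hpos

/-- Strict monotonicity of the spectral radius below a graph with a dominating vertex. -/
lemma eq_of_le_of_specRad_eq {n : ℕ} {G H : SimpleGraph (Fin n)} (h : G ≤ H) {d : Fin n}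
    (hd : ∀ v, v ≠ d → H.Adj d v) (heq : specRad G = specRad H) : G = H := by
  obtain ⟨z, hz, hpos, hle⟩ := exists_nonneg_specRad_mul_le d.pos G
  have h1 := sum_mul_sum_ite_adj_le h hz
  have h2 := rayleigh_le_specRad H z
  rw [heq] at hle
  have hev := eigenvector_of_rayleigh_eq H z (le_antisymm h2 (hle.trans h1))
  have hGH := le_antisymm h1 (h2.trans hle)
  have hzero : ∀ v w, z v = 0 → H.Adj v w → z w = 0 := by
    intro v w hv hvw
    have := hev v
    rw [hv, mul_zero, Finset.sum_eq_zero_iff_of_nonneg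
      (fun w _ => by split_ifs; exacts [hz w, le_rfl])] at this
    simpa [hvw] using this w (Finset.mem_univ w)
  have hd0 : z d ≠ 0 := by
    intro h0
    have : ∀ v, z v = 0 := fun v => by
      by_cases hv : v = d
      · rw [hv, h0]
      · exact hzero d v h0 (hd v hv)
    simp [this] at hpos
  have hzpos : ∀ v, 0 < z v := fun v => by
    refine lt_of_le_of_ne (hz v) fun h0 => hd0 ?_
    by_cases hv : v = d
    · rw [← hv, ← h0]
    · exact hzero v d h0.symm (hd v hv).symm
  refine le_antisymm h fun v w hvw => ?_
  by_contra hG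
  refine hGH.not_lt ?_
  refine Finset.sum_lt_sum
    (fun a _ => mul_le_mul_of_nonneg_left
      (Finset.sum_le_sum fun b _ => ite_adj_le_ite_adj h hz a b) (hz a))
    ⟨v, Finset.mem_univ v, mul_lt_mul_of_pos_left ?_ (hzpos v)⟩
  refine Finset.sum_lt_sum (fun b _ => ite_adj_le_ite_adj h hz v b) ⟨w, Finset.mem_univ w, ?_⟩
  simp [hG, hvw, hzpos w]

lemma specRad_eq_of_iso {n : ℕ} (hn : 0 < n) {G H : SimpleGraph (Fin n)} (f : G ≃g H) :
    specRad G = specRad H := by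
  suffices h : ∀ {G H : SimpleGraph (Fin n)}, (G ≃g H) → specRad G ≤ specRad H from
    le_antisymm (h f) (h f.symm)
  intro G H f
  obtain ⟨z, hz, hpos, hle⟩ := exists_nonneg_specRad_mul_le hn G
  have h := rayleigh_le_specRad H (fun v => z (f.symm v))
  rw [← f.toEquiv.sum_comp, ← f.toEquiv.sum_comp (fun v => z (f.symm v) ^ 2)] at h
  simp only [← f.toEquiv.sum_comp (fun w => if H.Adj _ w then z (f.symm w) else 0)] at h
  simp only [RelIso.coe_fn_toEquiv, RelIso.symm_apply_apply, f.map_adj_iff] at h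
  exact le_of_mul_le_mul_right (hle.trans h) hpos

/-- A graph of even order without a perfect matching has a vertex set `T` whose deletion leaves at
least `T.ncard + 2` components; `c` assigns to each vertex outside `T` the representative of its
component, and `R` is the set of representatives of the odd components. -/
lemma exists_barrier_of_forall_not_isPerfectMatching {V : Type*} [Finite V] (G : SimpleGraph V)
    (hV : Even (Nat.card V)) (h : ∀ M : G.Subgraph, ¬ M.IsPerfectMatching) :
    ∃ (T R : Set V) (c : V → V), T.ncard + 2 ≤ R.ncard ∧ Disjoint T R ∧ (∀ r ∈ R, c r = r) ∧
      ∀ a b, a ∉ T → b ∉ T → G.Adj a b → c a = c b := by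
  obtain ⟨T, hT⟩ := exists_isTutteViolator h hV
  unfold IsTutteViolator at hT
  set K := ((⊤ : G.Subgraph).deleteVerts T) with hK
  have hmem : ∀ w, w ∈ K.verts ↔ w ∉ T := by simp [hK]
  have hcard : Nat.card K.verts + T.ncard = Nat.card V := by
    have hv : K.verts = Tᶜ := Set.ext fun w => by simp [hmem]
    rw [hv, Nat.card_coe_set_eq, add_comm, Set.ncard_add_ncard_compl]
  have hpar := odd_ncard_oddComponents (G := K.coe)
  let rep : K.coe.ConnectedComponent → V := fun C => (C.out : K.verts)
  have hrep : Function.Injective rep := fun C D hCD => by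
    have : (C.out : K.verts) = D.out := Subtype.ext hCD
    rw [← C.out_eq, this, D.out_eq]
  let c : V → V := fun w =>
    if hw : w ∈ K.verts then rep (K.coe.connectedComponentMk ⟨w, hw⟩) else w
  refine ⟨T, rep '' K.coe.oddComponents, c, ?_, ?_, ?_, ?_⟩
  · rw [Set.ncard_image_of_injective _ hrep]
    by_contra hlt
    have h1 : K.coe.oddComponents.ncard = T.ncard + 1 := by omega
    rw [h1, ← Nat.not_even_iff_odd, ← Nat.not_even_iff_odd, not_iff_not, Nat.even_add_one] at hpar
    rw [← hcard, Nat.even_add] at hV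
    tauto
  · rw [Set.disjoint_right]
    rintro _ ⟨C, -, rfl⟩
    exact (hmem _).1 C.out.2
  · rintro _ ⟨C, -, rfl⟩
    have hw : rep C ∈ K.verts := C.out.2
    simp only [c, hw, dif_pos]
    congr 1
    exact C.out_eq
  · intro a b ha hb hab
    have ha' := (hmem a).2 ha
    have hb' := (hmem b).2 hb
    simp only [c, ha', hb', dif_pos]
    congr 1
    apply ConnectedComponent.sound
    apply Adj.reachable
    simp [hK, ha, hb, hab]

/-- An edge `uv` extends to a perfect matching of `G` as soon as `G - u - v` has one. -/
lemma exists_isPerfectMatching_of_induce_compl_pair {V : Type*} (G : SimpleGraph V) {u v : V}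
    (huv : G.Adj u v) (M : (G.induce ({u, v}ᶜ : Set V)).Subgraph) (hM : M.IsPerfectMatching) :
    ∃ N : G.Subgraph, N.IsPerfectMatching ∧ s(u, v) ∈ N.edgeSet := by
  let f := (Embedding.induce (G := G) ({u, v}ᶜ : Set V)).toHom
  have hf : Function.Injective f := (Embedding.induce (G := G) ({u, v}ᶜ : Set V)).injective
  have h1 : (M.map f).IsMatching := hM.1.map f hf
  have h2 := Subgraph.IsMatching.subgraphOfAdj huv
  have hverts : (M.map f).verts = {u, v}ᶜ := by
    ext w
    simp only [Subgraph.map_verts, Set.mem_image]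
    constructor
    · rintro ⟨a, -, rfl⟩
      exact a.2
    · exact fun hw => ⟨⟨w, hw⟩, hM.2 _, rfl⟩
  refine ⟨M.map f ⊔ G.subgraphOfAdj huv, ⟨h1.sup h2 ?_, fun w => ?_⟩, ?_⟩
  · rw [h1.support_eq_verts, h2.support_eq_verts, hverts]
    simp
  · rw [Subgraph.verts_sup, hverts]
    by_cases hw : w ∈ ({u, v} : Set V)
    · exact Or.inr (by simpa using hw)
    · exact Or.inl hw
  · simp

/-- If `G` is not matching covered, some set `S` of at least two vertices leaves at least `#S`
components when deleted, with representatives `R` and representative function `c`. -/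
lemma exists_barrier_of_not_isMatchingCovered {n : ℕ} (he : Even n) (G : SimpleGraph (Fin n))
    (h : ¬ IsMatchingCovered G) :
    ∃ (S R : Finset (Fin n)) (c : Fin n → Fin n), 2 ≤ #S ∧ #S ≤ #R ∧ Disjoint S R ∧
      (∀ r ∈ R, c r = r) ∧ ∀ a b, a ∉ S → b ∉ S → G.Adj a b → c a = c b := by
  unfold IsMatchingCovered at h
  push Not at h
  obtain ⟨e, hadj, hno⟩ := h
  induction e using Sym2.ind with
  | _ u v =>
  rw [mem_edgeSet] at hadj
  have hpair : ({u, v} : Set (Fin n)).ncard = 2 := Set.ncard_pair hadj.ne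
  have hcard : Nat.card ({u, v}ᶜ : Set (Fin n)) + 2 = n := by
    rw [Nat.card_coe_set_eq, ← hpair, add_comm, Set.ncard_add_ncard_compl, Nat.card_fin]
  obtain ⟨T, R, c, hTR, hdisj, hcR, hc⟩ :=
    exists_barrier_of_forall_not_isPerfectMatching (G.induce ({u, v}ᶜ : Set (Fin n)))
      (by rw [← hcard, Nat.even_add] at he; simpa using he)
      (fun M hM => by
        obtain ⟨N, hN, huv⟩ := exists_isPerfectMatching_of_induce_compl_pair G hadj M hM
        exact hno N hN huv)
  have hT : (Subtype.val '' T).ncard = T.ncard :=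
    Set.ncard_image_of_injective _ Subtype.val_injective
  have hR : (Subtype.val '' R).ncard = R.ncard :=
    Set.ncard_image_of_injective _ Subtype.val_injective
  have hS : (Subtype.val '' T ∪ {u, v}).ncard = T.ncard + 2 := by
    rw [Set.ncard_union_eq ?_, hT, hpair]
    rw [Set.disjoint_left]
    rintro _ ⟨a, -, rfl⟩
    exact a.2
  refine ⟨(Subtype.val '' T ∪ {u, v}).toFinset, (Subtype.val '' R).toFinset,
    fun w => if hw : w ∈ ({u, v}ᶜ : Set (Fin n)) then c ⟨w, hw⟩ else w, ?_, ?_, ?_, ?_, ?_⟩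
  · rw [← Set.ncard_eq_toFinset_card', hS]
    omega
  · rw [← Set.ncard_eq_toFinset_card', ← Set.ncard_eq_toFinset_card', hS, hR]
    exact hTR
  · rw [Set.disjoint_toFinset, Set.disjoint_right]
    rintro _ ⟨a, ha, rfl⟩ (⟨b, hb, hab⟩ | hab)
    · rw [Subtype.val_injective hab] at hb
      exact Set.disjoint_left.1 hdisj hb ha
    · exact a.2 hab
  · intro r hr
    rw [Set.mem_toFinset] at hr
    obtain ⟨a, ha, rfl⟩ := hr
    simp only [a.2, dif_pos]
    rw [hcR a ha]
  · intro a b ha hb hab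
    rw [Set.mem_toFinset, Set.mem_union, not_or] at ha hb
    have ha2 : a ∈ ({u, v}ᶜ : Set (Fin n)) := ha.2
    have hb2 : b ∈ ({u, v}ᶜ : Set (Fin n)) := hb.2
    simp only [ha2, hb2, dif_pos]
    rw [hc ⟨a, ha2⟩ ⟨b, hb2⟩ (fun h => ha.1 ⟨_, h, rfl⟩) (fun h => hb.1 ⟨_, h, rfl⟩) hab]

lemma specRad_lt_of_two_weights {n : ℕ} (hn : 0 < n) (G : SimpleGraph (Fin n))
    (S : Finset (Fin n)) {d a b c : ℝ} (ha : 0 < a) (hb : 0 < b)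
    (hd : ∀ v ∉ S, (#{w | w ∉ S ∧ G.Adj v w} : ℝ) ≤ d)
    (hS : (#S - 1) * a + (n - #S) * b < c * a) (hSc : #S * a + d * b < c * b) :
    specRad G < c := by
  refine specRad_lt_of_forall_sum_lt hn G (fun v => if v ∈ S then a else b)
    (fun v => by split_ifs <;> assumption) fun v => ?_
  by_cases hv : v ∈ S
  · simp only [hv, if_true]
    refine lt_of_le_of_lt ?_ hS
    have hle : ∀ w, (if G.Adj v w then (if w ∈ S then a else b) else 0) ≤
        (if w ∈ S then a else b) - if w = v then a else 0 := by
      intro w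
      by_cases hwv : w = v
      · subst hwv
        simp [hv]
      · simp only [hwv, if_false, sub_zero]
        split_ifs <;> linarith
    refine (Finset.sum_le_sum fun w _ => hle w).trans_eq ?_
    have hcard : (#(univ.filter fun w => w ∉ S) : ℝ) = n - #S := by
      rw [Finset.filter_notMem_eq_sdiff, ← Finset.compl_eq_univ_sdiff, Finset.card_compl,
        Fintype.card_fin, Nat.cast_sub (by simpa using Finset.card_le_univ S)]
    rw [Finset.sum_sub_distrib, Finset.sum_ite, Finset.sum_ite_eq' univ v]
    simp only [Finset.sum_const, nsmul_eq_mul, hcard, Finset.mem_univ, if_true]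
    simp only [Finset.filter_mem_eq_inter, Finset.univ_inter]
    ring
  · simp only [hv, if_false]
    refine lt_of_le_of_lt ?_ hSc
    have hle : ∀ w, (if G.Adj v w then (if w ∈ S then a else b) else 0) ≤
        (if w ∈ S then a else 0) + if w ∉ S ∧ G.Adj v w then b else 0 := by
      intro w
      by_cases hw : w ∈ S <;> by_cases hvw : G.Adj v w <;> simp [hw, hvw, ha.le]
    refine (Finset.sum_le_sum fun w _ => hle w).trans ?_
    rw [Finset.sum_add_distrib, ← Finset.sum_filter, ← Finset.sum_filter]
    simp only [Finset.sum_const, nsmul_eq_mul, Finset.filter_mem_eq_inter, Finset.univ_inter]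
    have := mul_le_mul_of_nonneg_right (hd v hv) hb.le
    linarith

/-- The Rayleigh quotient of `H_{m+1,3}` at the vector with value `ε` at `0` and `1` elsewhere. -/
lemma le_specRad_Hgraph_three {m : ℕ} (hm : 2 ≤ m) (ε : ℝ) :
    (m : ℝ) * (m - 1) + 4 * ε ≤ specRad (Hgraph (m + 1) 3) * (ε ^ 2 + m) := by
  have h := rayleigh_le_specRad (Hgraph (m + 1) 3) (Fin.cons ε fun _ => 1)
  have h00 : ¬ (Hgraph (m + 1) 3).Adj 0 0 := SimpleGraph.irrefl _
  have h0s : ∀ j : Fin m, (Hgraph (m + 1) 3).Adj 0 j.succ ↔ (j : ℕ) < 2 := by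
    intro j
    have := (Fin.succ_ne_zero j).symm
    simp only [Hgraph, SimpleGraph.fromRel_adj, Fin.val_zero, Fin.val_succ, ne_eq, this,
      not_false_eq_true, true_and]
    omega
  have hs0 : ∀ j : Fin m, (Hgraph (m + 1) 3).Adj j.succ 0 ↔ (j : ℕ) < 2 := by
    intro j
    rw [SimpleGraph.adj_comm, h0s]
  have hss : ∀ i j : Fin m, (Hgraph (m + 1) 3).Adj i.succ j.succ ↔ ¬ i = j := by
    intro i j
    simp [Hgraph]
  have hcard : #{j : Fin m | (j : ℕ) < 2} = 2 := by
    rw [Fin.card_filter_val_lt]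
    omega
  have hcard' : ∀ i : Fin m, (#{j : Fin m | ¬ i = j} : ℝ) = m - 1 := by
    intro i
    have : (univ.filter fun j : Fin m => ¬ i = j) = univ.erase i := by
      ext j
      simp [eq_comm]
    rw [this, Finset.card_erase_of_mem (Finset.mem_univ i), Finset.card_univ, Fintype.card_fin,
      Nat.cast_sub (by omega), Nat.cast_one]
  simp only [Fin.sum_univ_succ, Fin.cons_zero, Fin.cons_succ, h00, h0s, hs0, hss, if_false,
    one_mul, Finset.sum_add_distrib, one_pow] at h
  simp only [← Finset.sum_filter, Finset.sum_const, hcard, nsmul_eq_mul, hcard', Finset.card_univ,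
    Fintype.card_fin, mul_one] at h
  push_cast at h
  linarith

lemma sub_two_le_specRad_Hgraph_three {n : ℕ} (hn : 3 ≤ n) :
    (n : ℝ) - 2 ≤ specRad (Hgraph n 3) := by
  obtain ⟨m, rfl⟩ : ∃ m, n = m + 1 := ⟨n - 1, by omega⟩
  have h := le_specRad_Hgraph_three (m := m) (by omega) 0
  have hm : (0 : ℝ) < m := by exact_mod_cast (by omega : 0 < m)
  refine le_of_mul_le_mul_right ?_ hm
  push_cast
  linarith

section Barrier

variable {n : ℕ} {G : SimpleGraph (Fin n)} {S R : Finset (Fin n)} {c : Fin n → Fin n}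

lemma card_filter_adj_add_le_of_barrier (hdisj : Disjoint S R) (hcR : ∀ r ∈ R, c r = r)
    (hc : ∀ a b, a ∉ S → b ∉ S → G.Adj a b → c a = c b) {v : Fin n} (hv : v ∉ S) :
    #{w | w ∉ S ∧ G.Adj v w} + #S + #R ≤ n := by
  have hsub : R ⊆ insert (c v) (R.filter fun r => c r ≠ c v) := by
    intro r hr
    by_cases h : c r = c v
    · rw [← h, hcR r hr]
      exact Finset.mem_insert_self _ _
    · exact Finset.mem_insert_of_mem (Finset.mem_filter.2 ⟨hr, h⟩)
  have hR := (Finset.card_le_card hsub).trans (Finset.card_insert_le _ _)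
  have h1 : Disjoint (univ.filter fun w => w ∉ S ∧ G.Adj v w)
      (insert v (R.filter fun r => c r ≠ c v)) := by
    rw [Finset.disjoint_left]
    intro w hw hw'
    simp only [Finset.mem_filter, Finset.mem_univ, true_and, Finset.mem_insert] at hw hw'
    obtain rfl | ⟨-, hne⟩ := hw'
    · exact G.irrefl hw.2
    · exact hne (hc v w hv hw.1 hw.2).symm
  have h2 : Disjoint S ((univ.filter fun w => w ∉ S ∧ G.Adj v w) ∪
      insert v (R.filter fun r => c r ≠ c v)) := by
    rw [Finset.disjoint_left]
    intro w hw hw'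
    simp only [Finset.mem_union, Finset.mem_filter, Finset.mem_univ, true_and,
      Finset.mem_insert] at hw'
    obtain h | rfl | h := hw'
    · exact h.1 hw
    · exact hv hw
    · exact Finset.disjoint_left.1 hdisj hw h.1
  have h3 := Finset.card_le_univ (S ∪ ((univ.filter fun w => w ∉ S ∧ G.Adj v w) ∪
      insert v (R.filter fun r => c r ≠ c v)))
  rw [Finset.card_union_of_disjoint h2, Finset.card_union_of_disjoint h1,
    Finset.card_insert_of_notMem (by simp), Fintype.card_fin] at h3
  omega

lemma card_filter_adj_add_five_le_of_barrier (hS : #S = 2) (hR : 2 ≤ #R) (hdisj : Disjoint S R)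
    (hcR : ∀ r ∈ R, c r = r) (hc : ∀ a b, a ∉ S → b ∉ S → G.Adj a b → c a = c b)
    (hnb : ∀ v ∉ S, ∃ w ∉ S, G.Adj v w) {v : Fin n} (hv : v ∉ S) :
    #{w | w ∉ S ∧ G.Adj v w} + 5 ≤ n := by
  obtain ⟨r, hr, hrv⟩ : ∃ r ∈ R, r ≠ c v := Finset.exists_mem_ne (by omega) _
  have hcr : c r ≠ c v := by rwa [hcR r hr]
  have hrS : r ∉ S := Finset.disjoint_right.1 hdisj hr
  obtain ⟨t, htS, hrt⟩ := hnb r hrS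
  have hct : c t ≠ c v := by rwa [← hc r t hrS htS hrt]
  have hcard : #{v, r, t} = 3 := by
    refine Finset.card_eq_three.2 ⟨v, r, t, ?_, ?_, hrt.ne, rfl⟩
    · rintro rfl
      exact hcr rfl
    · rintro rfl
      exact hct rfl
  have h1 : Disjoint (univ.filter fun w => w ∉ S ∧ G.Adj v w) {v, r, t} := by
    rw [Finset.disjoint_left]
    intro w hw hw'
    simp only [Finset.mem_filter, Finset.mem_univ, true_and, Finset.mem_insert,
      Finset.mem_singleton] at hw hw'
    have hcw := hc v w hv hw.1 hw.2
    obtain rfl | rfl | rfl := hw'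
    · exact G.irrefl hw.2
    · exact hcr hcw.symm
    · exact hct hcw.symm
  have h2 : Disjoint S ((univ.filter fun w => w ∉ S ∧ G.Adj v w) ∪ {v, r, t}) := by
    rw [Finset.disjoint_left]
    intro w hw hw'
    simp only [Finset.mem_union, Finset.mem_filter, Finset.mem_univ, true_and,
      Finset.mem_insert, Finset.mem_singleton] at hw'
    obtain h | rfl | rfl | rfl := hw'
    · exact h.1 hw
    · exact hv hw
    · exact hrS hw
    · exact htS hw
  have h3 := Finset.card_le_univ (S ∪ ((univ.filter fun w => w ∉ S ∧ G.Adj v w) ∪ {v, r, t}))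
  rw [Finset.card_union_of_disjoint h2, Finset.card_union_of_disjoint h1, hcard,
    Fintype.card_fin] at h3
  omega

lemma specRad_lt_of_barrier_three_le (hn : 4 ≤ n) (he : Even n) (hS : 3 ≤ #S) (hSR : #S ≤ #R)
    (hdisj : Disjoint S R) (hcR : ∀ r ∈ R, c r = r)
    (hc : ∀ a b, a ∉ S → b ∉ S → G.Adj a b → c a = c b) :
    specRad G < specRad (Hgraph n 3) := by
  have h2S : 2 * #S ≤ n := by
    have := Finset.card_le_univ (S ∪ R)
    rw [Finset.card_union_of_disjoint hdisj, Fintype.card_fin] at this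
    omega
  have hd : ∀ v ∉ S, (#{w | w ∉ S ∧ G.Adj v w} : ℝ) ≤ n - 2 * #S := by
    intro v hv
    have : #{w | w ∉ S ∧ G.Adj v w} + 2 * #S ≤ n := by
      have := card_filter_adj_add_le_of_barrier hdisj hcR hc hv
      omega
    rw [le_sub_iff_add_le]
    exact_mod_cast this
  obtain rfl | hn8 : n = 6 ∨ 8 ≤ n := by
    obtain ⟨k, hk⟩ := he
    omega
  · have hS3 : #S = 3 := by omega
    have hH := le_specRad_Hgraph_three (m := 5) (by norm_num) (1 / 2)
    norm_num at hH
    rw [hS3] at hd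
    refine (specRad_lt_of_two_weights (c := 4.17) (a := 1.386) (b := 1) (by norm_num) G S
      (by norm_num) (by norm_num) hd ?_ ?_).trans ?_
    · rw [hS3]; norm_num
    · rw [hS3]; norm_num
    · norm_num
      linarith
  · refine lt_of_lt_of_le ?_ (sub_two_le_specRad_Hgraph_three (by omega))
    have hs : (3 : ℝ) ≤ #S := by exact_mod_cast hS
    have hs2 : (2 : ℝ) * #S ≤ n := by exact_mod_cast h2S
    have hn' : (8 : ℝ) ≤ n := by exact_mod_cast hn8
    have key : (2 : ℝ) < (#S - 2) * (n - #S - 2) := by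
      obtain h3 | h4 := hS.eq_or_lt
      · rw [← h3]
        norm_num
        linarith
      · have : (4 : ℝ) ≤ #S := by exact_mod_cast h4
        nlinarith
    refine specRad_lt_of_two_weights (a := n + #S - 2) (b := n - 1) (by omega) G S
      (by linarith) (by linarith) hd ?_ ?_ <;> nlinarith

lemma specRad_lt_of_barrier_two (hn : 4 ≤ n) (he : Even n) (hS : #S = 2) (hR : 2 ≤ #R)
    (hdisj : Disjoint S R) (hcR : ∀ r ∈ R, c r = r)
    (hc : ∀ a b, a ∉ S → b ∉ S → G.Adj a b → c a = c b) (hnb : ∀ v ∉ S, ∃ w ∉ S, G.Adj v w) :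
    specRad G < specRad (Hgraph n 3) := by
  refine lt_of_lt_of_le ?_ (sub_two_le_specRad_Hgraph_three (by omega))
  have hd := fun v (hv : v ∉ S) => card_filter_adj_add_five_le_of_barrier hS hR hdisj hcR hc hnb hv
  have hn6 : (6 : ℝ) ≤ n := by
    obtain ⟨r, hr⟩ : R.Nonempty := Finset.card_pos.1 (by omega)
    have := hd r (Finset.disjoint_right.1 hdisj hr)
    obtain ⟨k, hk⟩ := he
    exact_mod_cast (by omega : 6 ≤ n)
  refine specRad_lt_of_two_weights (a := n + 1) (b := n - 1) (d := n - 5) (by omega) G S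
    (by linarith) (by linarith) (fun v hv => ?_) ?_ ?_
  · rw [le_sub_iff_add_le]
    exact_mod_cast hd v hv
  · rw [hS]
    push_cast
    nlinarith
  · rw [hS]
    push_cast
    nlinarith

end Barrier

/-- If the neighbors of `w` lie in `{u, v}`, then `G` is, up to relabelling, a subgraph of
`H_{n,3}`. -/
lemma exists_perm_le_comap_Hgraph_three {n : ℕ} (hn : 4 ≤ n) (G : SimpleGraph (Fin n))
    {u v w : Fin n} (huv : u ≠ v) (hwu : w ≠ u) (hwv : w ≠ v)
    (hw : ∀ x, G.Adj w x → x = u ∨ x = v) :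
    ∃ e : Equiv.Perm (Fin n), G ≤ (Hgraph n 3).comap e ∧ (e u : ℕ) = 1 := by
  obtain ⟨e, he⟩ := Finset.exists_equiv_extend_of_card_eq (α := Fin n) (β := Fin n) (t := univ)
    (by simp) (s := {w, u, v})
    (f := fun x => if x = w then ⟨0, by omega⟩ else if x = u then ⟨1, by omega⟩ else ⟨2, by omega⟩)
    (Finset.subset_univ _) (by
      intro x hx y hy hxy
      simp only [Finset.coe_insert, Finset.coe_singleton, Set.mem_insert_iff,
        Set.mem_singleton_iff] at hx hy
      obtain rfl | rfl | rfl := hx <;> obtain rfl | rfl | rfl := hy <;>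
        simp_all [Fin.ext_iff, eq_comm])
  have hew : (e w : Fin n).val = 0 := by rw [he w (by simp)]; simp
  have heu : (e u : Fin n).val = 1 := by rw [he u (by simp)]; simp [hwu.symm]
  have hev : (e v : Fin n).val = 2 := by rw [he v (by simp)]; simp [hwv.symm, huv.symm]
  have hinj : Function.Injective fun x => (e x : Fin n).val :=
    Fin.val_injective.comp (Subtype.val_injective.comp e.injective)
  refine ⟨e.trans (Equiv.subtypeUnivEquiv Finset.mem_univ), ?_, heu⟩
  have hnb : ∀ x y, G.Adj x y → (e x : Fin n).val = 0 →
      0 < (e y : Fin n).val ∧ (e y : Fin n).val < 3 := by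
    intro x y hxy hx
    obtain rfl : x = w := hinj (hx.trans hew.symm)
    obtain rfl | rfl := hw y hxy <;> omega
  intro x y hxy
  have hne : (e x : Fin n).val ≠ (e y : Fin n).val := fun h => hxy.ne (hinj h)
  have h1 := hnb x y hxy
  have h2 := hnb y x hxy.symm
  simp only [SimpleGraph.comap_adj, Hgraph, SimpleGraph.fromRel_adj, ne_eq, Fin.ext_iff]
  change ¬ (e x : Fin n).val = (e y : Fin n).val ∧
    (((0 < (e x : Fin n).val ∧ 0 < (e y : Fin n).val) ∨
      ((e x : Fin n).val = 0 ∧ 0 < (e y : Fin n).val ∧ (e y : Fin n).val < 3)) ∨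
    ((0 < (e y : Fin n).val ∧ 0 < (e x : Fin n).val) ∨
      ((e y : Fin n).val = 0 ∧ 0 < (e x : Fin n).val ∧ (e x : Fin n).val < 3)))
  omega

/-- For even n ≥ 4, every n-vertex graph that is not matching covered satisfies
ρ(G) ≤ ρ(H_{n,3}), with equality iff G ≅ H_{n,3}. -/
theorem spectral_extremal_non_matchingCovered {n : ℕ} (hn : 4 ≤ n) (he : Even n)
    (G : SimpleGraph (Fin n)) (h : ¬ IsMatchingCovered G) :
    specRad G ≤ specRad (Hgraph n 3) ∧
      (specRad G = specRad (Hgraph n 3) ↔ Nonempty (G ≃g Hgraph n 3)) := by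
  have hn0 : 0 < n := by omega
  obtain ⟨S, R, c, hS, hSR, hdisj, hcR, hc⟩ := exists_barrier_of_not_isMatchingCovered he G h
  have of_lt : specRad G < specRad (Hgraph n 3) → specRad G ≤ specRad (Hgraph n 3) ∧
      (specRad G = specRad (Hgraph n 3) ↔ Nonempty (G ≃g Hgraph n 3)) := fun hlt =>
    ⟨hlt.le, fun heq => absurd heq hlt.ne, fun ⟨f⟩ => specRad_eq_of_iso hn0 f⟩
  obtain hS2 | hS3 := hS.eq_or_lt
  · by_cases hnb : ∀ v ∉ S, ∃ w ∉ S, G.Adj v w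
    · exact of_lt (specRad_lt_of_barrier_two hn he hS2.symm (by omega) hdisj hcR hc hnb)
    · push Not at hnb
      obtain ⟨w, hwS, hw⟩ := hnb
      obtain ⟨u, v, huv, rfl⟩ := Finset.card_eq_two.1 hS2.symm
      simp only [Finset.mem_insert, Finset.mem_singleton, not_or] at hwS
      obtain ⟨e, hle, heu⟩ := exists_perm_le_comap_Hgraph_three hn G huv hwS.1 hwS.2
        (fun x hx => by
          by_contra hxS
          exact hw x (by simpa using hxS) hx)
      have hiso := specRad_eq_of_iso hn0 (Iso.comap e (Hgraph n 3))
      refine ⟨(specRad_mono hn0 hle).trans_eq hiso, fun heq => ?_,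
        fun ⟨f⟩ => specRad_eq_of_iso hn0 f⟩
      have hG := eq_of_le_of_specRad_eq hle (d := u) (fun x hx => ?_) (heq.trans hiso.symm)
      · rw [hG]
        exact ⟨Iso.comap e (Hgraph n 3)⟩
      · have hne : (e u : ℕ) ≠ e x := fun h => hx (e.injective (Fin.ext h.symm))
        simp only [SimpleGraph.comap_adj, Hgraph, SimpleGraph.fromRel_adj, ne_eq, Fin.ext_iff]
        omega
  · exact of_lt (specRad_lt_of_barrier_three_le hn he hS3 hSR hdisj hcR hc)
end

section
/- Let 1 ≤ a ≤ b with b ≥ 2 and n ≥ 3a+4 (and na even when a = b). If G is an n-vertex graph that is not [a,b]-covered, then e(G) ≤ binomial(n-1, 2) + a - 1, with equality if and only if G ≅ H_{n,a}. -/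
open SimpleGraph Finset
open scoped Classical

/-- The number of edges of a finite graph. -/
noncomputable def edgeCount {V : Type*} [Fintype V] (G : SimpleGraph V) : ℕ :=
  Nat.card G.edgeSet

/-- There is an [a,b]-factor of G (a spanning subgraph F with a ≤ d_F(v) ≤ b for all v)
containing the edge uv. -/
def HasABFactorThrough {V : Type*} [Fintype V] (G : SimpleGraph V) (a b : ℕ)
    (u v : V) : Prop :=
  ∃ F : SimpleGraph V, F ≤ G ∧ F.Adj u v ∧
    ∀ w : V, a ≤ (F.neighborSet w).ncard ∧ (F.neighborSet w).ncard ≤ b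

/-- G is [a,b]-covered: every edge of G lies in some [a,b]-factor. -/
def IsABCovered {V : Type*} [Fintype V] (G : SimpleGraph V) (a b : ℕ) : Prop :=
  ∀ u v : V, G.Adj u v → HasABFactorThrough G a b u v

/-- The degree of a vertex, as the cardinality of its neighbour set. -/
noncomputable def deg {V : Type*} (F : SimpleGraph V) (w : V) : ℕ :=
  (F.neighborSet w).ncard

section Degrees

variable {V : Type*} [Fintype V]

lemma deg_eq_degree (F : SimpleGraph V) (w : V) : deg F w = F.degree w := by
  rw [deg, Set.ncard_eq_toFinset_card', ← SimpleGraph.card_neighborFinset_eq_degree]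
  rfl

lemma deg_eq_card_filter (F : SimpleGraph V) (w : V) :
    deg F w = (univ.filter (F.Adj w)).card := by
  rw [deg, Set.ncard_eq_toFinset_card']
  congr 1
  ext x
  simp

lemma deg_eq_sum (F : SimpleGraph V) (w : V) :
    deg F w = ∑ x, if F.Adj w x then 1 else 0 := by
  rw [deg_eq_card_filter, Finset.card_filter]

lemma even_sum_deg (F : SimpleGraph V) : Even (∑ w, deg F w) := by
  simp only [deg_eq_degree, F.sum_degrees_eq_twice_card_edges]
  exact even_two_mul _

lemma deg_sup_edge (F : SimpleGraph V) {s t : V} (hst : s ≠ t) (h : ¬ F.Adj s t) (w : V) :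
    deg (F ⊔ edge s t) w =
      deg F w + (if w = s then 1 else 0) + (if w = t then 1 else 0) := by
  have h' : ¬ F.Adj t s := fun h' => h h'.symm
  by_cases hs : w = s
  · subst hs
    have : (F ⊔ edge w t).neighborSet w = insert t (F.neighborSet w) := by
      ext x
      simp only [mem_neighborSet, sup_adj, edge_adj, Set.mem_insert_iff]
      grind
    rw [deg, this, Set.ncard_insert_of_notMem (by simpa using h) (Set.toFinite _)]
    simp [hst, deg]
  · by_cases ht : w = t
    · subst ht
      have : (F ⊔ edge s w).neighborSet w = insert s (F.neighborSet w) := by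
        ext x
        simp only [mem_neighborSet, sup_adj, edge_adj, Set.mem_insert_iff]
        grind
      rw [deg, this, Set.ncard_insert_of_notMem (by simpa using h') (Set.toFinite _)]
      simp [hs, deg]
    · have : (F ⊔ edge s t).neighborSet w = F.neighborSet w := by
        ext x
        simp only [mem_neighborSet, sup_adj, edge_adj]
        grind
      rw [deg, this]
      simp [hs, ht, deg]

lemma deg_sdiff_edge (F : SimpleGraph V) {s t : V} (h : F.Adj s t) (w : V) :
    deg (F \ edge s t) w + (if w = s then 1 else 0) + (if w = t then 1 else 0) = deg F w := by
  rw [← deg_sup_edge (F \ edge s t) h.ne (by simp [edge_adj, h.ne]) w]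
  congr 1
  ext x y
  have := h.symm
  simp only [sup_adj, sdiff_adj, edge_adj]
  grind [SimpleGraph.Adj.ne]

lemma sum_deg_sup_edge (F : SimpleGraph V) {s t : V} (hst : s ≠ t) (h : ¬ F.Adj s t) :
    ∑ w, deg (F ⊔ edge s t) w = ∑ w, deg F w + 2 := by
  simp [deg_sup_edge F hst h, Finset.sum_add_distrib]

lemma sum_deg_sdiff_edge (F : SimpleGraph V) {s t : V} (h : F.Adj s t) :
    ∑ w, deg (F \ edge s t) w + 2 = ∑ w, deg F w := by
  simp [← deg_sdiff_edge F h, Finset.sum_add_distrib]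

/-- Two distinct vertices are incident with at least `d(x) + d(y) - 1` edges. -/
lemma two_mul_deg_add_deg_le (K : SimpleGraph V) {x y : V} (hxy : x ≠ y) :
    2 * (deg K x + deg K y) ≤ ∑ w, deg K w + 2 := by
  have key : ∀ w, (if w = x then deg K x else 0) + (if w = y then deg K y else 0) +
      ((if K.Adj x w then 1 else 0) + (if K.Adj y w then 1 else 0)) ≤
      deg K w + (if w = x then 1 else 0) + (if w = y then 1 else 0) := by
    intro w
    by_cases hx : w = x
    · subst hx
      simp only [hxy, SimpleGraph.irrefl, if_true, if_false]
      split_ifs <;> omega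
    · by_cases hy : w = y
      · subst hy
        simp only [hxy.symm, SimpleGraph.irrefl, if_true, if_false]
        split_ifs <;> omega
      · simp only [hx, hy, if_false, zero_add, add_zero]
        rw [deg_eq_sum K w]
        calc _ = ∑ v ∈ ({x, y} : Finset V), (if K.Adj w v then 1 else 0) := by
              rw [Finset.sum_pair hxy, K.adj_comm w x, K.adj_comm w y]
          _ ≤ _ := Finset.sum_le_sum_of_subset (Finset.subset_univ _)
  have := Finset.sum_le_sum (fun w (_ : w ∈ (univ : Finset V)) => key w)
  simp only [Finset.sum_add_distrib, Finset.sum_ite_eq', Finset.mem_univ, if_true,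
    ← deg_eq_sum] at this
  omega

end Degrees

section Augmentation

variable {V : Type*}

/-- `F` is a subgraph of `H` with degrees at most `g`, even after raising the degrees of
`y` and of `z` by one. -/
def IsDeficientAt (H : SimpleGraph V) (g : V → ℕ) (F : SimpleGraph V) (y z : V) : Prop :=
  F ≤ H ∧ ∀ w, deg F w + (if w = y then 1 else 0) + (if w = z then 1 else 0) ≤ g w

lemma IsDeficientAt.symm {H F : SimpleGraph V} {g : V → ℕ} {y z : V}
    (h : IsDeficientAt H g F y z) : IsDeficientAt H g F z y :=
  ⟨h.1, fun w => by have := h.2 w; omega⟩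

variable [Fintype V]

/-- If `yq` is a free edge and `qp` a used one, exchanging them moves the deficiency
from `y` to `p`. -/
lemma IsDeficientAt.move {H F : SimpleGraph V} {g : V → ℕ} {y z q p : V}
    (h : IsDeficientAt H g F y z) (hyq : H.Adj y q) (hF : ¬ F.Adj y q) (hqp : F.Adj q p) :
    IsDeficientAt H g ((F ⊔ edge y q) \ edge q p) p z ∧
      ∑ w, deg ((F ⊔ edge y q) \ edge q p) w = ∑ w, deg F w := by
  have hadj : (F ⊔ edge y q).Adj q p := Or.inl hqp
  refine ⟨⟨?_, fun w => ?_⟩, ?_⟩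
  · refine sdiff_le.trans (sup_le h.1 ?_)
    exact (edge_le_iff _).2 (Or.inr hyq)
  · have h1 := deg_sdiff_edge _ hadj w
    have h2 := deg_sup_edge F hyq.ne hF w
    have h3 := h.2 w
    omega
  · have h1 := sum_deg_sdiff_edge _ hadj
    have h2 := sum_deg_sup_edge F hyq.ne hF
    omega

/-- If there is no exact `g`-factor, then some subgraph of maximum size admits no augmentation
and its two deficiencies are placed so as to minimise the weight. -/
lemma exists_extremal_isDeficientAt (H : SimpleGraph V) (g wt : V → ℕ)
    (hpar : Even (∑ w, g w)) (hno : ¬ ∃ F ≤ H, ∀ w, deg F w = g w) :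
    ∃ F y z, IsDeficientAt H g F y z ∧
      (∀ s t, IsDeficientAt H g F s t → H.Adj s t → F.Adj s t) ∧
      (∀ q p, H.Adj y q → ¬ F.Adj y q → H.Adj z p → ¬ F.Adj z p → ¬ F.Adj q p) ∧
      (∀ q p, H.Adj y q → ¬ F.Adj y q → F.Adj q p → wt y ≤ wt p) ∧
      (∀ q p, H.Adj z q → ¬ F.Adj z q → F.Adj q p → wt z ≤ wt p) := by
  obtain ⟨F₀, ⟨hF₀H, hF₀g⟩, hmax⟩ := Set.exists_max_image
    {F : SimpleGraph V | F ≤ H ∧ ∀ w, deg F w ≤ g w} (fun F => ∑ w, deg F w)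
    (Set.toFinite _) ⟨⊥, bot_le, fun w => by simp [deg]⟩
  set M := ∑ w, deg F₀ w with hM
  have hne : ∃ y z, IsDeficientAt H g F₀ y z := by
    obtain ⟨y, hy⟩ : ∃ y, deg F₀ y < g y := by
      by_contra! hcon
      exact hno ⟨F₀, hF₀H, fun w => le_antisymm (hF₀g w) (hcon w)⟩
    by_cases hy2 : deg F₀ y + 2 ≤ g y
    · refine ⟨y, y, hF₀H, fun w => ?_⟩
      have := hF₀g w
      split_ifs with hw
      · subst hw; omega
      · omega
    · obtain ⟨z, hzy, hz⟩ : ∃ z, z ≠ y ∧ deg F₀ z < g z := by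
        by_contra! hcon
        have : ∀ w, g w = deg F₀ w + if w = y then 1 else 0 := by
          intro w
          split_ifs with hw
          · subst hw; omega
          · exact le_antisymm (hcon w hw) (hF₀g w)
        simp only [this, Finset.sum_add_distrib, Finset.sum_ite_eq', Finset.mem_univ,
          if_true] at hpar
        have := even_sum_deg F₀
        grind
      refine ⟨y, z, hF₀H, fun w => ?_⟩
      have := hF₀g w
      split_ifs with hw hw' hw'
      · subst hw; exact absurd hw'.symm hzy
      · subst hw; omega
      · subst hw'; omega
      · omega
  have hadd : ∀ F s t, IsDeficientAt H g F s t → ∑ w, deg F w = M → H.Adj s t → F.Adj s t := by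
    intro F s t hst hFM hadj
    by_contra hF
    have hle := hmax (F ⊔ edge s t) ⟨sup_le hst.1 ((edge_le_iff _).2 (Or.inr hadj)), fun w => by
      have h1 := deg_sup_edge F hadj.ne hF w
      have h2 := hst.2 w
      omega⟩
    have := sum_deg_sup_edge F hadj.ne hF
    omega
  obtain ⟨y₀, z₀, hyz₀⟩ := hne
  obtain ⟨⟨F, y, z⟩, ⟨hdef, hFM⟩, hmin⟩ := Set.exists_min_image
    {x : SimpleGraph V × V × V | IsDeficientAt H g x.1 x.2.1 x.2.2 ∧ ∑ w, deg x.1 w = M}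
    (fun x => wt x.2.1 + wt x.2.2) (Set.toFinite _) ⟨(F₀, y₀, z₀), hyz₀, rfl⟩
  simp only at hdef hFM
  refine ⟨F, y, z, hdef, fun s t hst => hadd F s t hst hFM, ?_, ?_, ?_⟩
  · intro q p hyq hFyq hzp hFzp hqp
    obtain ⟨hdef', hsum⟩ := hdef.move hyq hFyq hqp
    have hyz : H.Adj y z → F.Adj y z := hadd F y z hdef hFM
    have := hadd _ _ _ hdef' (hsum.trans hFM) hzp.symm
    simp only [sdiff_adj, sup_adj, edge_adj] at this
    have h1 := hyq.ne
    have h2 := hzp.ne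
    have h3 := hqp.ne
    have h4 : ¬ F.Adj p z := fun h => hFzp h.symm
    grind
  · intro q p hyq hFyq hqp
    obtain ⟨hdef', hsum⟩ := hdef.move hyq hFyq hqp
    have := hmin (_, p, z) ⟨hdef', hsum.trans hFM⟩
    simpa using this
  · intro q p hzq hFzq hqp
    obtain ⟨hdef', hsum⟩ := hdef.symm.move hzq hFzq hqp
    have := hmin (_, y, p) ⟨hdef'.symm, hsum.trans hFM⟩
    simpa using this

/-- Numerical form of the obstruction to an exact `g`-factor: `A` and `B` are the free
neighbourhoods of the deficient vertices `y` and `z`, and `P` is the set of neighbours of `A`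
in a maximum subgraph. -/
lemma exists_obstruction (H : SimpleGraph V) (g wt : V → ℕ)
    (hpar : Even (∑ w, g w)) (hno : ¬ ∃ F ≤ H, ∀ w, deg F w = g w) :
    ∃ (y z : V) (A B P : Finset V), wt z ≤ wt y ∧ 1 ≤ g y ∧ 1 ≤ g z ∧
      deg H y + (if y = z then 2 else 1) ≤ A.card + g y ∧
      deg H z + (if y = z then 2 else 1) ≤ B.card + g z ∧
      (∀ q ∈ A, 1 ≤ deg H q) ∧ (∀ q ∈ B, 1 ≤ deg H q) ∧ (∀ p ∈ P, 1 ≤ deg H p) ∧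
      ∑ q ∈ A, g q + (if z ∈ P then 1 else 0) ≤ ∑ p ∈ P, g p ∧
      y ∉ P ∧ y ∉ B ∧ z ∉ B ∧ Disjoint P B ∧ ∀ p ∈ P, wt y ≤ wt p := by
  obtain ⟨F, y, z, hdef, hadd, hcross, hwy, hwz, hle⟩ :
      ∃ F y z, IsDeficientAt H g F y z ∧
      (∀ s t, IsDeficientAt H g F s t → H.Adj s t → F.Adj s t) ∧
      (∀ q p, H.Adj y q → ¬ F.Adj y q → H.Adj z p → ¬ F.Adj z p → ¬ F.Adj q p) ∧
      (∀ q p, H.Adj y q → ¬ F.Adj y q → F.Adj q p → wt y ≤ wt p) ∧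
      (∀ q p, H.Adj z q → ¬ F.Adj z q → F.Adj q p → wt z ≤ wt p) ∧ wt z ≤ wt y := by
    obtain ⟨F, y, z, h1, h2, h3, h4, h5⟩ := exists_extremal_isDeficientAt H g wt hpar hno
    rcases le_total (wt z) (wt y) with h | h
    · exact ⟨F, y, z, h1, h2, h3, h4, h5, h⟩
    · exact ⟨F, z, y, h1.symm, h2,
        fun q p a b c d e => h3 p q c d a b e.symm, h5, h4, h⟩
  have hFg : ∀ w, deg F w ≤ g w := fun w => by have := hdef.2 w; omega
  have hlt : ∀ x, x = y ∨ x = z → deg F x < g x := by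
    rintro x (rfl | rfl)
    · have := hdef.2 x
      simp only [if_true] at this
      omega
    · have := hdef.2 x
      simp only [if_true] at this
      omega
  have hsat : ∀ x, deg F x < g x → ∀ q, H.Adj x q → ¬ F.Adj x q → deg F q = g q := by
    intro x hx q hxq hF
    by_contra hq
    refine hF (hadd x q ⟨hdef.1, fun w => ?_⟩ hxq)
    have h1 := hFg w
    have h2 := hFg q
    have h3 := hxq.ne
    split_ifs with hw hw' hw'
    · exact absurd (hw.symm.trans hw') h3
    · subst hw; omega
    · subst hw'; omega
    · omega
  have hfree : ∀ x, (univ.filter fun q => H.Adj x q ∧ ¬ F.Adj x q).card + deg F x = deg H x := by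
    intro x
    rw [deg_eq_card_filter, deg_eq_card_filter, Finset.filter_and_not,
      Finset.card_sdiff_add_card_eq_card]
    exact fun q => by simpa using fun h => hdef.1 h
  set A := univ.filter fun q => H.Adj y q ∧ ¬ F.Adj y q with hA
  set B := univ.filter fun q => H.Adj z q ∧ ¬ F.Adj z q with hB
  set P := univ.filter fun p => ∃ q ∈ A, F.Adj q p with hP
  have memA : ∀ q, q ∈ A ↔ H.Adj y q ∧ ¬ F.Adj y q := by simp [hA]
  have memB : ∀ q, q ∈ B ↔ H.Adj z q ∧ ¬ F.Adj z q := by simp [hB]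
  have memP : ∀ p, p ∈ P ↔ ∃ q ∈ A, F.Adj q p := by simp [hP]
  have hpos : ∀ {x w}, H.Adj x w → 1 ≤ deg H w := by
    intro x w h
    rw [deg_eq_card_filter]
    exact Finset.card_pos.2 ⟨x, by simpa using h.symm⟩
  have hBy : ∀ x, deg F x < g x → x ∉ B := fun x hx hxB =>
    hx.ne (hsat z (hlt z (Or.inr rfl)) x ((memB x).1 hxB).1 ((memB x).1 hxB).2)
  refine ⟨y, z, A, B, P, hle, by have := hlt y (Or.inl rfl); omega,
    by have := hlt z (Or.inr rfl); omega, ?_, ?_, ?_, ?_, ?_, ?_, ?_, ?_, ?_, ?_, ?_⟩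
  · have h1 := hdef.2 y
    have h2 : A.card + deg F y = deg H y := hfree y
    simp only [if_true] at h1
    split_ifs at h1 ⊢ <;> omega
  · have h1 := hdef.2 z
    have h2 : B.card + deg F z = deg H z := hfree z
    simp only [if_true, eq_comm (a := z) (b := y)] at h1
    split_ifs at h1 ⊢ <;> omega
  · exact fun q hq => hpos ((memA q).1 hq).1
  · exact fun q hq => hpos ((memB q).1 hq).1
  · intro p hp
    obtain ⟨q, -, hqp⟩ := (memP p).1 hp
    exact hpos (hdef.1 hqp)
  · have h1 : ∑ q ∈ A, g q = ∑ q ∈ A, deg F q := Finset.sum_congr rfl fun q hq =>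
      (hsat y (hlt y (Or.inl rfl)) q ((memA q).1 hq).1 ((memA q).1 hq).2).symm
    have h2 : ∑ q ∈ A, deg F q ≤ ∑ p ∈ P, deg F p := by
      have : ∀ q ∈ A, deg F q = ∑ p ∈ P, if F.Adj q p then 1 else 0 := by
        intro q hq
        rw [deg_eq_sum]
        refine (Finset.sum_subset (Finset.subset_univ P) fun p _ hp => ?_).symm
        exact if_neg fun h => hp ((memP p).2 ⟨q, hq, h⟩)
      rw [Finset.sum_congr rfl this, Finset.sum_comm]
      refine Finset.sum_le_sum fun p _ => ?_
      rw [deg_eq_sum]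
      simp only [F.adj_comm p]
      exact Finset.sum_le_sum_of_subset (Finset.subset_univ A)
    have h3 : ∑ p ∈ P, (deg F p + if p = z then 1 else 0) ≤ ∑ p ∈ P, g p :=
      Finset.sum_le_sum fun p _ => by have := hdef.2 p; omega
    rw [Finset.sum_add_distrib, Finset.sum_ite_eq'] at h3
    omega
  · intro h
    obtain ⟨q, hq, hqy⟩ := (memP y).1 h
    exact ((memA q).1 hq).2 hqy.symm
  · exact hBy y (hlt y (Or.inl rfl))
  · exact hBy z (hlt z (Or.inr rfl))
  · refine Finset.disjoint_left.2 fun p hp hpB => ?_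
    obtain ⟨q, hq, hqp⟩ := (memP p).1 hp
    exact hcross q p ((memA q).1 hq).1 ((memA q).1 hq).2 ((memB p).1 hpB).1 ((memB p).1 hpB).2 hqp
  · intro p hp
    obtain ⟨q, hq, hqp⟩ := (memP p).1 hp
    exact hwy q p ((memA q).1 hq).1 ((memA q).1 hq).2 hqp

end Augmentation

section Counting

variable {V : Type*}

lemma mul_card_add_le_sum [Fintype V] (wt : V → ℕ) {P : Finset V} {y z : V} (hy : y ∉ P)
    (hP : ∀ p ∈ P, wt y ≤ wt p) :
    wt y * (P.card + 1) + (if z = y ∨ z ∈ P then 0 else wt z) ≤ ∑ w, wt w := by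
  have h1 : wt y * (P.card + 1) ≤ ∑ w ∈ insert y P, wt w := by
    rw [Finset.sum_insert hy, mul_add, mul_one, add_comm, mul_comm]
    have := Finset.card_nsmul_le_sum P wt (wt y) hP
    simpa using this
  split_ifs with hz
  · exact h1.trans (Finset.sum_le_sum_of_subset (Finset.subset_univ _))
  · calc _ ≤ ∑ w ∈ insert y P, wt w + wt z := by omega
      _ = ∑ w ∈ insert z (insert y P), wt w := by
        rw [Finset.sum_insert (a := z) (by simpa using hz), add_comm]
      _ ≤ _ := Finset.sum_le_sum_of_subset (Finset.subset_univ _)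

lemma card_add_card_add_le {P B S : Finset V} {y z : V} (hP : P ⊆ S) (hB : B ⊆ S)
    (hyS : y ∈ S) (hzS : z ∈ S) (hyP : y ∉ P) (hyB : y ∉ B) (hzB : z ∉ B)
    (hPB : Disjoint P B) :
    P.card + B.card + 1 + (if z = y ∨ z ∈ P then 0 else 1) ≤ S.card := by
  have h1 : (insert y (P ∪ B)).card = P.card + B.card + 1 := by
    rw [Finset.card_insert_of_notMem (by simp [hyP, hyB]), Finset.card_union_of_disjoint hPB]
  have h2 : insert y (P ∪ B) ⊆ S :=
    Finset.insert_subset hyS (Finset.union_subset hP hB)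
  split_ifs with hz
  · rw [← h1]
    exact Finset.card_le_card h2
  · rw [not_or] at hz
    rw [← h1, ← Finset.card_insert_of_notMem (a := z) (by simp [hz, hzB])]
    exact Finset.card_le_card (Finset.insert_subset hzS h2)

lemma deg_add_deg_compl [Fintype V] (G : SimpleGraph V) (w : V) :
    deg G w + deg Gᶜ w + 1 = Fintype.card V := by
  have key : ∀ x, ((if G.Adj w x then 1 else 0) + (if Gᶜ.Adj w x then 1 else 0) +
      if x = w then 1 else 0) = 1 := fun x => by
    have : G.Adj w x → x ≠ w := fun h => h.ne.symm
    simp only [compl_adj]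
    split_ifs <;> grind
  have := Finset.sum_congr (rfl : (univ : Finset V) = univ) fun x _ => key x
  simp only [Finset.sum_add_distrib, Finset.sum_ite_eq', Finset.mem_univ,
    if_true, Finset.sum_const, smul_eq_mul, mul_one, Finset.card_univ] at this
  rw [deg_eq_sum G, deg_eq_sum Gᶜ]
  convert this

lemma sum_deg_add_sum_deg_compl [Fintype V] (G : SimpleGraph V) :
    ∑ w, deg G w + ∑ w, deg Gᶜ w + Fintype.card V = Fintype.card V * Fintype.card V := by
  have : ∑ w, (deg G w + deg Gᶜ w + 1) = ∑ _w : V, Fintype.card V :=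
    Finset.sum_congr rfl fun w _ => deg_add_deg_compl G w
  simpa [Finset.sum_add_distrib] using this

end Counting

section FactorsOfDegreeAtLeastTwo

lemma weight_bounds_false {N a D T ε : ℕ} (hN : 2 * a + 4 ≤ N) (hN9 : 9 ≤ N) (hε : ε ≤ 1)
    (hD : N + 1 ≤ 2 * D + a) (hD2 : 2 * D ≤ N + 1 + ε) (hT : T ≤ 2 * N + ε)
    (hmul : D * (N - D) ≤ T) (hε10 : ε = 1 → 10 ≤ N) : False := by
  have h4 : N + 6 ≤ 4 * D := by omega
  obtain ⟨X, rfl⟩ : ∃ X, N = D + X := ⟨N - D, by omega⟩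
  rw [Nat.add_sub_cancel_left] at hmul
  rcases Nat.le_one_iff_eq_zero_or_eq_one.1 hε with rfl | rfl
  · nlinarith
  · have := hε10 rfl
    nlinarith

lemma obstruction_bounds_false {n a ε D D' T α β π : ℕ} {p q : Prop}
    (hn : 3 * a + 4 ≤ n) (ha : 2 ≤ a) (hε : ε ≤ 1) (hε3 : ε = 1 → 3 ≤ a)
    (hA : n + (if p then 1 else 0) ≤ a + D + α) (hB : n + (if p then 1 else 0) ≤ a + D' + β)
    (hp : p → D' = D)
    (hcard : π + β + 1 + (if p ∨ q then 0 else 1) ≤ n)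
    (hmul : D * (π + 1) + (if p ∨ q then 0 else D') ≤ T)
    (hAP : α + (if q then 1 else 0) ≤ π + 1) (hD : 2 * D + a ≤ n + 1 + ε) (hDD : D' ≤ D)
    (hT : T + 2 * a ≤ 2 * n + ε) : False := by
  obtain ⟨N, rfl⟩ : ∃ N, n = N + a := ⟨n - a, by omega⟩
  have hlow : N + 1 ≤ 2 * D + a := by
    by_cases p <;> by_cases q <;> simp_all <;> omega
  have hα : N - D ≤ π + 1 := by
    split_ifs at hA hAP <;> omega
  have hm : D * (N - D) ≤ T :=
    (Nat.mul_le_mul_left D hα).trans ((Nat.le_add_right _ _).trans hmul)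
  by_cases hN : 9 ≤ N
  · exact weight_bounds_false (a := a) (ε := ε) (by omega) hN hε hlow (by omega) (by omega) hm
      (by omega)
  · obtain rfl : N = 8 := by omega
    obtain rfl : a = 2 := by omega
    obtain rfl : ε = 0 := by omega
    have hD4 : D = 4 := by omega
    subst hD4
    by_cases p <;> by_cases q <;> simp_all <;> omega

variable {V : Type*} [Fintype V]

/-- Exact factors through a prescribed edge in a dense graph; `ε = 1` is used to repair the
parity when the number of vertices and `a` are both odd. -/
lemma exists_exact_factor_through (G : SimpleGraph V) {a : ℕ} (ha : 2 ≤ a)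
    (hcard : 3 * a + 4 ≤ Fintype.card V)
    (hC : ∑ w, deg Gᶜ w + 2 * a ≤ 2 * Fintype.card V) {u v : V} (huv : G.Adj u v) {ε : ℕ}
    (hε : ε ≤ 1) (hε3 : ε = 1 → 3 ≤ a)
    (hδ : ∀ w, a + (if w = u then ε else 0) ≤ deg G w)
    (hpar : Even (Fintype.card V * a + ε)) :
    ∃ F ≤ G, F.Adj u v ∧ ∀ w, deg F w = a + if w = u then ε else 0 := by
  set n := Fintype.card V with hn
  set H := G \ edge u v with hH
  have hdH : ∀ w, deg H w + (if w = u then 1 else 0) + (if w = v then 1 else 0) = deg G w :=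
    deg_sdiff_edge G huv
  obtain ⟨g, hg⟩ : ∃ g : V → ℕ, ∀ w, g w + (if w = u then 1 else 0) + (if w = v then 1 else 0) =
      a + if w = u then ε else 0 := by
    refine ⟨fun w => a + (if w = u then ε else 0) - (if w = u then 1 else 0) -
      (if w = v then 1 else 0), fun w => ?_⟩
    have h : ¬ (w = u ∧ w = v) := fun h => huv.ne (h.1.symm.trans h.2)
    dsimp only
    split_ifs <;> omega
  have hg1 : ∀ w, 1 ≤ g w := fun w => by
    have h1 := hg w
    have : ¬ (w = u ∧ w = v) := fun h => huv.ne (h.1.symm.trans h.2)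
    split_ifs at h1 <;> first | omega | exact absurd ⟨‹_›, ‹_›⟩ this
  have hga : ∀ w, g w ≤ a := fun w => by
    have h1 := hg w
    split_ifs at h1 <;> omega
  have hgH : ∀ w, g w ≤ deg H w := fun w => by
    have h1 := hg w
    have h2 := hdH w
    have h3 := hδ w
    omega
  have hsumg : ∑ w, g w + 2 = n * a + ε := by
    have := Finset.sum_congr (rfl : (univ : Finset V) = univ) fun w _ => hg w
    simpa [Finset.sum_add_distrib, add_assoc] using this
  by_cases hfac : ∃ F ≤ H, ∀ w, deg F w = g w
  · obtain ⟨F, hFH, hF⟩ := hfac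
    have hFuv : ¬ F.Adj u v := fun h => by simpa [hH, edge_adj, huv.ne] using hFH h
    refine ⟨F ⊔ edge u v, sup_le (hFH.trans sdiff_le) ((edge_le_iff _).2 (Or.inr huv)),
      Or.inr (by simp [edge_adj, huv.ne]), fun w => ?_⟩
    rw [deg_sup_edge F huv.ne hFuv, hF, hg]
  exfalso
  obtain ⟨y, z, A, B, P, hwt, -, -, hA, hB, -, -, -, hsum, hyP, hyB, hzB, hPB, hwP⟩ :=
    exists_obstruction H g (fun w => deg Gᶜ w + if w = u then ε else 0) (by grind) hfac
  set wt : V → ℕ := fun w => deg Gᶜ w + if w = u then ε else 0 with hwtdef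
  have hslack : ∀ w, deg H w + wt w + a + 1 = n + g w := fun w => by
    have h1 := hg w
    have h2 := hdH w
    have h3 : deg G w + deg Gᶜ w + 1 = n := deg_add_deg_compl G w
    simp only [hwtdef]
    omega
  have hT : ∑ w, wt w + 2 * a ≤ 2 * n + ε := by
    simp only [hwtdef, Finset.sum_add_distrib, Finset.sum_ite_eq', Finset.mem_univ, if_true]
    omega
  have hcardP := card_add_card_add_le (Finset.subset_univ P) (Finset.subset_univ B)
    (Finset.mem_univ y) (Finset.mem_univ z) hyP hyB hzB hPB
  rw [Finset.card_univ, ← hn] at hcardP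
  have hmul := mul_card_add_le_sum wt (z := z) hyP hwP
  have hsumA : a * A.card ≤ ∑ q ∈ A, g q + 2 := by
    have h1 : ∑ q ∈ A, a ≤
        ∑ q ∈ A, (g q + (if q = u then 1 else 0) + (if q = v then 1 else 0)) :=
      Finset.sum_le_sum fun q _ => by have := hg q; omega
    simp only [Finset.sum_add_distrib, Finset.sum_const, smul_eq_mul, Finset.sum_ite_eq'] at h1
    rw [mul_comm]
    split_ifs at h1 <;> omega
  have hsumP : ∑ p ∈ P, g p ≤ a * P.card := by
    have := Finset.sum_le_card_nsmul P g a fun p _ => hga p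
    simpa [mul_comm] using this
  have hAP : A.card + (if z ∈ P then 1 else 0) ≤ P.card + 1 := by
    by_contra! hcon
    split_ifs at hcon hsum
    · have : a * (P.card + 1) ≤ a * A.card := Nat.mul_le_mul_left _ (by omega)
      rw [mul_add] at this
      omega
    · have : a * (P.card + 2) ≤ a * A.card := Nat.mul_le_mul_left _ (by omega)
      rw [mul_add] at this
      have : 0 < A.card := by omega
      have h5 : A.card ≤ ∑ q ∈ A, g q := by
        simpa using Finset.card_nsmul_le_sum A g 1 fun q _ => hg1 q
      nlinarith
  have hPne : P.Nonempty := by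
    rw [Finset.nonempty_iff_ne_empty]
    rintro rfl
    have h5 : A.card ≤ ∑ q ∈ A, g q := by
      simpa using Finset.card_nsmul_le_sum A g 1 fun q _ => hg1 q
    have h6 := hgH y
    simp only [Finset.sum_empty] at hsum
    split_ifs at hA <;> omega
  have hpair : 2 * wt y + a ≤ n + 1 + ε := by
    obtain ⟨p, hp⟩ := hPne
    have hyp : y ≠ p := fun h => hyP (h ▸ hp)
    have h1 := two_mul_deg_add_deg_le Gᶜ hyp
    have h2 : wt y ≤ wt p := hwP p hp
    have h3 : wt y + wt p ≤ deg Gᶜ y + deg Gᶜ p + ε := by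
      simp only [hwtdef]
      split_ifs <;> first | omega | exact absurd (by simp_all) hyp
    omega
  have hy := hslack y
  have hz := hslack z
  have hwt' : wt z ≤ wt y := hwt
  refine obstruction_bounds_false (D := wt y) (D' := wt z) (α := A.card) (β := B.card)
    (π := P.card) (p := z = y) (q := z ∈ P) hcard ha hε hε3 ?_ ?_ (fun h => h ▸ rfl)
    (by convert hcardP) (by convert hmul) (by convert hAP) hpair hwt' hT
  · rcases eq_or_ne z y with rfl | hzy
    · rw [if_pos rfl] at hA ⊢
      omega
    · rw [if_neg hzy.symm] at hA
      rw [if_neg hzy]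
      omega
  · rcases eq_or_ne z y with rfl | hzy
    · rw [if_pos rfl] at hB ⊢
      omega
    · rw [if_neg hzy.symm] at hB
      rw [if_neg hzy]
      omega

end FactorsOfDegreeAtLeastTwo

section Matchings

variable {V : Type*} [Fintype V]

/-- A dense graph on an even number of non-isolated vertices has a matching covering them. -/
lemma exists_matching_of_dense (H : SimpleGraph V) {S : Finset V} {m E : ℕ}
    (hS : ∀ w, w ∈ S ↔ 1 ≤ deg H w) (hm : S.card = m) (heven : Even m)
    (hsum : m * m ≤ ∑ w, deg H w + m + 2 * E) (hE : 8 ≤ m ∧ E ≤ m ∨ m = 6 ∧ E ≤ 5) :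
    ∃ F ≤ H, ∀ w, deg F w = if w ∈ S then 1 else 0 := by
  by_contra hfac
  let K : SimpleGraph V :=
    { Adj := fun w x => w ≠ x ∧ w ∈ S ∧ x ∈ S ∧ ¬ H.Adj w x
      symm := ⟨fun w x h => ⟨h.1.symm, h.2.2.1, h.2.1, fun h' => h.2.2.2 h'.symm⟩⟩
      loopless := ⟨fun w h => h.1 rfl⟩ }
  have hadj : ∀ {w x}, H.Adj w x → x ∈ S := fun {w x} h => by
    rw [hS, deg]
    exact (Set.ncard_pos (Set.toFinite _)).2 ⟨w, h.symm⟩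
  have hK : ∀ w ∈ S, deg K w + deg H w + 1 = m := by
    intro w hw
    have key : ∀ x, ((if K.Adj w x then 1 else 0) + (if H.Adj w x then 1 else 0) +
        if x = w then 1 else 0) = if x ∈ S then 1 else 0 := fun x => by
      have h1 : H.Adj w x → x ≠ w := fun h => h.ne.symm
      have h2 : H.Adj w x → x ∈ S := hadj
      have h3 : K.Adj w x ↔ w ≠ x ∧ w ∈ S ∧ x ∈ S ∧ ¬ H.Adj w x := Iff.rfl
      split_ifs <;> grind
    have := Finset.sum_congr (rfl : (univ : Finset V) = univ) fun x _ => key x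
    simp only [Finset.sum_add_distrib, Finset.sum_ite_eq', Finset.mem_univ, if_true,
      Finset.sum_ite_mem, Finset.univ_inter, Finset.sum_const, smul_eq_mul, mul_one, hm] at this
    rw [deg_eq_sum K, deg_eq_sum H]
    convert this
  have hK0 : ∀ w, w ∉ S → deg K w = 0 := fun w hw => by
    rw [deg, Set.ncard_eq_zero (Set.toFinite _), Set.eq_empty_iff_forall_notMem]
    exact fun x hx => hw hx.2.1
  have hH0 : ∀ w, w ∉ S → deg H w = 0 := fun w hw => by
    have := mt (hS w).2 hw
    omega
  have hsumK : ∑ w, deg K w + ∑ w, deg H w + m = m * m := by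
    have key : ∀ w, deg K w + deg H w + (if w ∈ S then 1 else 0) = if w ∈ S then m else 0 := by
      intro w
      split_ifs with hw
      · exact hK w hw
      · rw [hK0 w hw, hH0 w hw]
    have := Finset.sum_congr (rfl : (univ : Finset V) = univ) fun x _ => key x
    simpa only [Finset.sum_add_distrib, Finset.sum_ite_mem, Finset.univ_inter, Finset.sum_const,
      smul_eq_mul, mul_one, hm] using this
  obtain ⟨y, z, A, B, P, hwt, hgy, hgz, hA, hB, hAS, hBS, hPS, hsumAP, hyP, hyB, hzB, hPB, hwP⟩ :=
    exists_obstruction H (fun w => if w ∈ S then 1 else 0) (fun w => deg K w)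
      (by simpa [hm] using heven) hfac
  have hAS' : A ⊆ S := fun q hq => (hS q).2 (hAS q hq)
  have hBS' : B ⊆ S := fun q hq => (hS q).2 (hBS q hq)
  have hPS' : P ⊆ S := fun q hq => (hS q).2 (hPS q hq)
  have hyS : y ∈ S := by
    by_contra h
    simp [h] at hgy
  have hzS : z ∈ S := by
    by_contra h
    simp [h] at hgz
  simp only [hyS, hzS, if_true] at hA hB
  rw [Finset.sum_congr rfl fun q hq => if_pos (hAS' hq),
    Finset.sum_congr rfl fun q hq => if_pos (hPS' hq)] at hsumAP
  simp only [Finset.sum_const, smul_eq_mul, mul_one] at hsumAP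
  have hcard := card_add_card_add_le hPS' hBS' hyS hzS hyP hyB hzB hPB
  have hmul := mul_card_add_le_sum (fun w => deg K w) (z := z) hyP hwP
  have hy := hK y hyS
  have hz := hK z hzS
  have hy1 := (hS y).1 hyS
  have hpair : 4 * deg K y ≤ 2 * E + 2 := by
    obtain ⟨p, hp⟩ : P.Nonempty := by
      rw [← Finset.card_pos]
      split_ifs at hA hsumAP <;> omega
    have h1 := two_mul_deg_add_deg_le K (x := y) (y := p) (fun h => hyP (h ▸ hp))
    have h2 : deg K y ≤ deg K p := hwP p hp
    omega
  obtain ⟨k, rfl⟩ := heven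
  rcases eq_or_ne z y with rfl | hzy
  · simp only [if_true, true_or] at hA hB hcard
    split_ifs at hsumAP; omega
  · rw [if_neg hzy.symm] at hA
    rw [if_neg hzy.symm] at hB
    simp only [hzy, false_or] at hcard hmul
    have hk : deg K y = k ∧ deg K z = k := by
      split_ifs at hcard hsumAP <;> omega
    rw [hm] at hcard
    have hcon : k * (k + 1) ≤ 2 * E := by
      rw [hk.1, hk.2] at hmul
      by_cases hzP : z ∈ P
      · simp only [hzP, if_true] at hsumAP hmul
        have : k * (k + 1) ≤ k * (P.card + 1) := Nat.mul_le_mul_left _ (by omega)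
        omega
      · simp only [hzP, if_false] at hsumAP hmul
        have : k * k ≤ k * (P.card + 1) := Nat.mul_le_mul_left _ (by omega)
        rw [mul_add]
        omega
    rcases hE with ⟨h8, hE⟩ | ⟨h6, hE⟩
    · nlinarith
    · obtain rfl : k = 3 := by omega
      omega

end Matchings

section OneTwoFactors

variable {V : Type*} [Fintype V]

lemma deg_deleteIncidenceSet (G : SimpleGraph V) (x w : V) :
    deg (G.deleteIncidenceSet x) w + (if G.Adj x w then 1 else 0) +
      (if w = x then deg G x else 0) = deg G w := by
  by_cases hw : w = x
  · subst hw
    have : (G.deleteIncidenceSet w).neighborSet w = ∅ := by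
      ext z
      simp [deleteIncidenceSet_adj]
    simp [deg, this]
  · have key : ∀ z, (if (G.deleteIncidenceSet x).Adj w z then 1 else 0) +
        (if z = x then (if G.Adj x w then 1 else 0) else 0) = if G.Adj w z then 1 else 0 := by
      intro z
      have h1 := G.adj_comm x w
      have h2 : (G.deleteIncidenceSet x).Adj w z ↔ _ := deleteIncidenceSet_adj
      split_ifs <;> grind
    have := Finset.sum_congr (rfl : (univ : Finset V) = univ) fun z _ => key z
    simp only [Finset.sum_add_distrib, Finset.sum_ite_eq', Finset.mem_univ, if_true] at this
    rw [if_neg hw, add_zero, deg_eq_sum, deg_eq_sum G, ← this]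
    congr!

lemma sum_deg_deleteIncidenceSet (G : SimpleGraph V) (x : V) :
    ∑ w, deg (G.deleteIncidenceSet x) w + 2 * deg G x = ∑ w, deg G w := by
  have := Finset.sum_congr (rfl : (univ : Finset V) = univ)
    fun w _ => deg_deleteIncidenceSet G x w
  simp only [Finset.sum_add_distrib, Finset.sum_ite_eq', Finset.mem_univ, if_true,
    ← deg_eq_sum] at this
  rw [← this, two_mul, add_assoc]

/-- A perfect matching of `G - uv` together with `uv`. -/
lemma exists_factor_of_even (G : SimpleGraph V) (hcard : 7 ≤ Fintype.card V)
    (hC : ∑ w, deg Gᶜ w + 2 ≤ 2 * Fintype.card V) (heven : Even (Fintype.card V)) {u v : V}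
    (huv : G.Adj u v) (hiso : ∀ w, 1 ≤ deg (G \ edge u v) w) :
    ∃ F ≤ G, F.Adj u v ∧ ∀ w, 1 ≤ deg F w ∧ deg F w ≤ 2 := by
  have h8 : 8 ≤ Fintype.card V := by
    obtain ⟨k, hk⟩ := heven
    omega
  have h1 := sum_deg_add_sum_deg_compl G
  have h2 := sum_deg_sdiff_edge G huv
  obtain ⟨F, hFH, hF⟩ := exists_matching_of_dense (G \ edge u v) (S := univ)
    (E := Fintype.card V) (fun w => by simpa using hiso w) Finset.card_univ heven (by omega)
    (Or.inl ⟨h8, le_rfl⟩)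
  have hFuv : ¬ F.Adj u v := fun h => by simpa [edge_adj, huv.ne] using hFH h
  refine ⟨F ⊔ edge u v, sup_le (hFH.trans sdiff_le) ((edge_le_iff _).2 (Or.inr huv)),
    Or.inr (by simp [edge_adj, huv.ne]), fun w => ?_⟩
  rw [deg_sup_edge F huv.ne hFuv, hF, if_pos (Finset.mem_univ w)]
  have : ¬ (w = u ∧ w = v) := fun h => huv.ne (h.1.symm.trans h.2)
  split_ifs <;> grind

/-- The edge `uv`, where `u` is a leaf, together with a perfect matching of `G - u - v`. -/
lemma exists_factor_of_leaf (G : SimpleGraph V) (hcard : 7 ≤ Fintype.card V)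
    (hC : ∑ w, deg Gᶜ w + 2 ≤ 2 * Fintype.card V) (heven : Even (Fintype.card V)) {u v : V}
    (huv : G.Adj u v) (hu : deg G u = 1) :
    ∃ F ≤ G, F.Adj u v ∧ ∀ w, 1 ≤ deg F w ∧ deg F w ≤ 2 := by
  obtain ⟨k, hk⟩ := heven
  have hne := huv.ne
  set G₁ := G.deleteIncidenceSet u with hG₁
  set H := G₁.deleteIncidenceSet v with hH
  have h1 := sum_deg_add_sum_deg_compl G
  have h2 : ∑ w, deg G₁ w + 2 * deg G u = ∑ w, deg G w := sum_deg_deleteIncidenceSet G u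
  have h3 : ∑ w, deg H w + 2 * deg G₁ v = ∑ w, deg G₁ w := sum_deg_deleteIncidenceSet G₁ v
  have d1 : ∀ w, deg G₁ w + (if G.Adj u w then 1 else 0) + (if w = u then deg G u else 0) =
    deg G w := deg_deleteIncidenceSet G u
  have d2 := deg_deleteIncidenceSet G₁ v
  rw [← hH] at d2
  have hv : deg G₁ v + 1 = deg G v := by simpa [huv, hne.symm] using d1 v
  have hHu : deg H u = 0 := by
    have e1 := d1 u
    have e2 := d2 u
    rw [if_pos rfl] at e1
    omega
  have hHv : deg H v = 0 := by
    have e2 := d2 v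
    rw [if_pos rfl] at e2
    omega
  have hcv := deg_add_deg_compl G v
  have hcu := deg_add_deg_compl G u
  have hS : ∀ w, w ∈ ({u, v} : Finset V)ᶜ ↔ 1 ≤ deg H w := by
    intro w
    rw [Finset.mem_compl, Finset.mem_insert, Finset.mem_singleton, not_or]
    constructor
    · rintro ⟨hwu, hwv⟩
      have h := two_mul_deg_add_deg_le Gᶜ hwu
      have hcw := deg_add_deg_compl G w
      have e1 := d1 w
      have e2 := d2 w
      rw [if_neg hwu] at e1
      rw [if_neg hwv] at e2
      split_ifs at e1 e2 <;> omega
    · refine fun h => ⟨?_, ?_⟩ <;> rintro rfl <;> omega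
  have hScard : (({u, v} : Finset V)ᶜ).card = Fintype.card V - 2 := by
    rw [Finset.card_compl, Finset.card_pair hne]
  obtain ⟨m, hm⟩ : ∃ m, Fintype.card V = m + 2 := ⟨Fintype.card V - 2, by omega⟩
  rw [hm, Nat.add_sub_cancel] at hScard
  obtain ⟨F, hFH, hF⟩ := exists_matching_of_dense H (E := 1) hS hScard ⟨k - 1, by omega⟩
    (by rw [hm] at h1; nlinarith) (by omega)
  have hFuv : ¬ F.Adj u v := fun h => by
    have := hFH h
    simp [hH, deleteIncidenceSet_adj] at this
  have hHG : H ≤ G := (deleteIncidenceSet_le _ _).trans (deleteIncidenceSet_le _ _)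
  refine ⟨F ⊔ edge u v, sup_le (hFH.trans hHG) ((edge_le_iff _).2 (Or.inr huv)),
    Or.inr (by simp [edge_adj, hne]), fun w => ?_⟩
  rw [deg_sup_edge F hne hFuv, hF]
  simp only [Finset.mem_compl, Finset.mem_insert, Finset.mem_singleton]
  split_ifs <;> grind

/-- The edge `uv` together with a perfect matching of `G - x`, where `x` is an end of `uv`. -/
lemma exists_factor_of_odd (G : SimpleGraph V) (hcard : 7 ≤ Fintype.card V)
    (hC : ∑ w, deg Gᶜ w + 2 ≤ 2 * Fintype.card V) (hodd : ¬ Even (Fintype.card V)) {u v x : V}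
    (huv : G.Adj u v) (hx : x = u ∨ x = v)
    (hiso : ∀ w, w ≠ x → 1 ≤ deg (G.deleteIncidenceSet x) w)
    (hx1 : Fintype.card V = 7 → 1 ≤ deg Gᶜ x) :
    ∃ F ≤ G, F.Adj u v ∧ ∀ w, 1 ≤ deg F w ∧ deg F w ≤ 2 := by
  rw [Nat.not_even_iff_odd] at hodd
  obtain ⟨k, hk⟩ := hodd
  have h1 := sum_deg_add_sum_deg_compl G
  have h2 := sum_deg_deleteIncidenceSet G x
  have hcx := deg_add_deg_compl G x
  have hS : ∀ w, w ∈ ({x} : Finset V)ᶜ ↔ 1 ≤ deg (G.deleteIncidenceSet x) w := by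
    intro w
    rw [Finset.mem_compl, Finset.mem_singleton]
    refine ⟨hiso w, ?_⟩
    rintro h rfl
    have := deg_deleteIncidenceSet G w w
    rw [if_pos rfl] at this
    omega
  have hScard : (({x} : Finset V)ᶜ).card = 2 * k := by
    rw [Finset.card_compl, Finset.card_singleton, hk, Nat.add_sub_cancel]
  have key : ∃ E, (8 ≤ 2 * k ∧ E ≤ 2 * k ∨ 2 * k = 6 ∧ E ≤ 5) ∧
      ∑ w, deg Gᶜ w ≤ 2 * deg Gᶜ x + 2 * E := by
    by_cases h7 : Fintype.card V = 7
    · have := hx1 h7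
      exact ⟨5, Or.inr ⟨by omega, le_rfl⟩, by omega⟩
    · exact ⟨2 * k, Or.inl ⟨by omega, le_rfl⟩, by omega⟩
  obtain ⟨E, hE, hE'⟩ := key
  obtain ⟨F, hFH, hF⟩ := exists_matching_of_dense (G.deleteIncidenceSet x) hS hScard
    (even_two_mul k) (by rw [hk] at h1 hcx; nlinarith) hE
  have hFuv : ¬ F.Adj u v := fun h => by
    have := hFH h
    rw [deleteIncidenceSet_adj] at this
    rcases hx with rfl | rfl
    · exact this.2.1 rfl
    · exact this.2.2 rfl
  refine ⟨F ⊔ edge u v, sup_le (hFH.trans (deleteIncidenceSet_le _ _))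
    ((edge_le_iff _).2 (Or.inr huv)), Or.inr (by simp [edge_adj, huv.ne]), fun w => ?_⟩
  rw [deg_sup_edge F huv.ne hFuv, hF]
  simp only [Finset.mem_compl, Finset.mem_singleton]
  have := huv.ne
  split_ifs <;> grind

/-- Two paths with three and four vertices, in the case of seven vertices where `u` and `v` are
adjacent to all other vertices. -/
lemma exists_factor_of_card_eq_seven (G : SimpleGraph V) (hcard : Fintype.card V = 7)
    (hC : ∑ w, deg Gᶜ w ≤ 12) {u v : V} (huv : u ≠ v) (hu : deg Gᶜ u = 0) (hv : deg Gᶜ v = 0) :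
    ∃ F ≤ G, F.Adj u v ∧ ∀ w, 1 ≤ deg F w ∧ deg F w ≤ 2 := by
  have hadj : ∀ {x}, deg Gᶜ x = 0 → ∀ w, w ≠ x → G.Adj x w := fun {x} hx w hw => by
    rw [deg, Set.ncard_eq_zero (Set.toFinite _), Set.eq_empty_iff_forall_notMem] at hx
    have := hx w
    rw [mem_neighborSet, compl_adj] at this
    by_contra h
    exact this ⟨hw.symm, h⟩
  obtain ⟨c, hc, hc2⟩ : ∃ c ∈ ({u, v} : Finset V)ᶜ, deg Gᶜ c ≤ 2 := by
    by_contra! h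
    have h1 : _ ≤ ∑ w ∈ ({u, v} : Finset V)ᶜ, deg Gᶜ w :=
      Finset.card_nsmul_le_sum _ _ 3 fun c hc => h c hc
    rw [Finset.card_compl, Finset.card_pair huv, hcard] at h1
    have h2 : ∑ w ∈ ({u, v} : Finset V)ᶜ, deg Gᶜ w ≤ ∑ w, deg Gᶜ w :=
      Finset.sum_le_sum_of_subset (Finset.subset_univ _)
    rw [smul_eq_mul] at h1
    omega
  have hcc := deg_add_deg_compl G c
  rw [deg_eq_card_filter G] at hcc
  have h2 : 1 < (univ.filter (G.Adj c) \ {u, v}).card := by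
    have := Finset.le_card_sdiff ({u, v} : Finset V) (univ.filter (G.Adj c))
    rw [Finset.card_pair huv] at this
    omega
  obtain ⟨l, hl, r, hr, hlr⟩ := Finset.one_lt_card.1 h2
  simp only [Finset.mem_sdiff, Finset.mem_filter, Finset.mem_univ, true_and, Finset.mem_insert,
    Finset.mem_singleton, not_or, Finset.mem_compl] at hl hr hc
  have hcl := hl.1.ne
  have hcr := hr.1.ne
  have h5 : ({u, v, c, l, r} : Finset V).card = 5 := by
    simp only [Finset.card_insert_eq_ite, Finset.card_singleton, Finset.mem_insert,
      Finset.mem_singleton]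
    grind
  obtain ⟨s, t, hst, hrest⟩ : ∃ s t, s ≠ t ∧ ({u, v, c, l, r} : Finset V)ᶜ = {s, t} := by
    rw [← Finset.card_eq_two, Finset.card_compl, h5, hcard]
  have hmem : ∀ w, w ∉ ({u, v, c, l, r} : Finset V) ↔ w = s ∨ w = t := fun w => by
    rw [← Finset.mem_compl, hrest, Finset.mem_insert, Finset.mem_singleton]
  simp only [Finset.mem_insert, Finset.mem_singleton, not_or] at hmem
  have hs := (hmem s).2 (Or.inl rfl)
  have ht := (hmem t).2 (Or.inr rfl)
  refine ⟨edge u v ⊔ edge u s ⊔ edge v t ⊔ edge c l ⊔ edge c r, ?_, ?_, fun w => ?_⟩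
  · simp only [sup_le_iff, edge_le_iff]
    have := hadj hu v huv.symm
    have := hadj hu s hs.1
    have := hadj hv t ht.2.1
    tauto
  · simp [edge_adj, huv]
  · have h0 : deg (edge u v) w = (if w = u then 1 else 0) + (if w = v then 1 else 0) := by
      have := deg_sup_edge (⊥ : SimpleGraph V) huv (by simp) w
      rw [bot_sup_eq] at this
      simpa [deg] using this
    rw [deg_sup_edge _ hcr, deg_sup_edge _ hcl, deg_sup_edge _ (Ne.symm ht.2.1),
      deg_sup_edge _ (Ne.symm hs.1), h0]
    · have := hmem w
      split_ifs <;> grind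
    all_goals
      simp only [sup_adj, edge_adj]
      grind

end OneTwoFactors

section Covering

variable {V : Type*} [Fintype V]

lemma exists_one_two_factor (G : SimpleGraph V) (hcard : 7 ≤ Fintype.card V)
    (hC : ∑ w, deg Gᶜ w + 2 ≤ 2 * Fintype.card V) (hδ : ∀ w, 1 ≤ deg G w) {u v : V}
    (huv : G.Adj u v) : ∃ F ≤ G, F.Adj u v ∧ ∀ w, 1 ≤ deg F w ∧ deg F w ≤ 2 := by
  have hcompl := deg_add_deg_compl G
  by_cases heven : Even (Fintype.card V)
  · by_cases hiso : ∀ w, 1 ≤ deg (G \ edge u v) w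
    · exact exists_factor_of_even G hcard hC heven huv hiso
    push Not at hiso
    obtain ⟨w, hw⟩ := hiso
    have h1 := deg_sdiff_edge G huv w
    have h2 := hδ w
    by_cases hwu : w = u
    · subst hwu
      rw [if_pos rfl, if_neg huv.ne] at h1
      exact exists_factor_of_leaf G hcard hC heven huv (by omega)
    · rw [if_neg hwu] at h1
      have hwv : w = v := by
        by_contra h
        rw [if_neg h] at h1
        omega
      subst hwv
      rw [if_pos rfl] at h1
      obtain ⟨F, hFG, hF, hdeg⟩ := exists_factor_of_leaf G hcard hC heven huv.symm (by omega)
      exact ⟨F, hFG, hF.symm, hdeg⟩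
  have hbad : ∀ {x y}, G.Adj x y → (¬ ∀ w, w ≠ x → 1 ≤ deg (G.deleteIncidenceSet x) w) →
      (∀ w, w ≠ y → 1 ≤ deg (G.deleteIncidenceSet y) w) ∧ 1 ≤ deg Gᶜ y := by
    have hleaf : ∀ {x w}, w ≠ x → ¬ 1 ≤ deg (G.deleteIncidenceSet x) w →
        deg G w = 1 ∧ G.Adj x w := by
      intro x w hwx h
      have h1 := deg_deleteIncidenceSet G x w
      have h2 := hδ w
      rw [if_neg hwx] at h1
      split_ifs at h1 with h3
      · exact ⟨by omega, h3⟩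
      · omega
    have hnbr : ∀ {x y w}, deg G w = 1 → G.Adj x w → G.Adj y w → x = y := by
      intro x y w h hx hy
      rw [deg, Set.ncard_eq_one] at h
      obtain ⟨z, hz⟩ := h
      have h1 : x ∈ G.neighborSet w := hx.symm
      have h2 : y ∈ G.neighborSet w := hy.symm
      rw [hz] at h1 h2
      exact h1.trans h2.symm
    intro x y hxy hx
    push Not at hx
    obtain ⟨w, hwx, hw⟩ := hx
    obtain ⟨hw1, hxw⟩ := hleaf hwx (by omega)
    refine ⟨fun w' hw'y => ?_, ?_⟩
    · by_contra hw'
      obtain ⟨hw'1, hyw'⟩ := hleaf hw'y hw'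
      have hne : w ≠ w' := fun h => hxy.ne (hnbr hw1 hxw (h ▸ hyw'))
      have := two_mul_deg_add_deg_le Gᶜ hne
      have := hcompl w
      have := hcompl w'
      omega
    · have := hcompl y
      have := hcompl w
      by_cases hwy : w = y
      · subst hwy
        omega
      · have : Gᶜ.Adj y w := (compl_adj _ _ _).2
          ⟨Ne.symm hwy, fun h => hxy.ne (hnbr hw1 hxw h)⟩
        exact (Set.ncard_pos (Set.toFinite _)).2 ⟨w, this⟩
  by_cases hu : ∀ w, w ≠ u → 1 ≤ deg (G.deleteIncidenceSet u) w
  swap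
  · obtain ⟨h1, h2⟩ := hbad huv hu
    exact exists_factor_of_odd G hcard hC heven huv (Or.inr rfl) h1 fun _ => h2
  by_cases hv : ∀ w, w ≠ v → 1 ≤ deg (G.deleteIncidenceSet v) w
  swap
  · obtain ⟨h1, h2⟩ := hbad huv.symm hv
    exact exists_factor_of_odd G hcard hC heven huv (Or.inl rfl) h1 fun _ => h2
  by_cases hcu : Fintype.card V = 7 → 1 ≤ deg Gᶜ u
  · exact exists_factor_of_odd G hcard hC heven huv (Or.inl rfl) hu hcu
  by_cases hcv : Fintype.card V = 7 → 1 ≤ deg Gᶜ v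
  · exact exists_factor_of_odd G hcard hC heven huv (Or.inr rfl) hv hcv
  push Not at hcu hcv
  exact exists_factor_of_card_eq_seven G hcu.1 (by omega) huv.ne (by omega) (by omega)

/-- A graph with minimum degree at least `a` and at most `n - a` missing edges is
`[a, b]`-covered. -/
theorem isABCovered_of_sum_deg_compl_le (G : SimpleGraph V) {a b : ℕ} (ha : 1 ≤ a)
    (hab : a ≤ b) (hb : 2 ≤ b) (hcard : 3 * a + 4 ≤ Fintype.card V)
    (hpar : a = b → Even (Fintype.card V * a))
    (hC : ∑ w, deg Gᶜ w + 2 * a ≤ 2 * Fintype.card V) (hδ : ∀ w, a ≤ deg G w) :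
    IsABCovered G a b := by
  intro u v huv
  obtain rfl | ha2 : a = 1 ∨ 2 ≤ a := by omega
  · obtain ⟨F, hFG, hF, hdeg⟩ := exists_one_two_factor G hcard hC hδ huv
    exact ⟨F, hFG, hF, fun w => ⟨(hdeg w).1, (hdeg w).2.trans hb⟩⟩
  by_cases heven : Even (Fintype.card V * a)
  · obtain ⟨F, hFG, hF, hdeg⟩ := exists_exact_factor_through G ha2 hcard hC huv (ε := 0)
      (by omega) (by omega) (by simpa using hδ) (by simpa using heven)
    refine ⟨F, hFG, hF, fun w => ?_⟩
    have : deg F w = a := by simpa using hdeg w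
    exact ⟨this.ge, this.le.trans hab⟩
  have hb' : a + 1 ≤ b := Nat.lt_of_le_of_ne hab (mt hpar heven)
  have ha3 : 3 ≤ a := by
    rw [Nat.not_even_iff_odd, Nat.odd_mul] at heven
    obtain ⟨k, hk⟩ := heven.2
    omega
  have key : ∀ {x y}, G.Adj x y → a + 1 ≤ deg G x → HasABFactorThrough G a b x y := by
    intro x y hxy hx
    obtain ⟨F, hFG, hF, hdeg⟩ := exists_exact_factor_through G ha2 hcard hC hxy (ε := 1)
      le_rfl (fun _ => ha3)
      (fun w => by
        have := hδ w
        split_ifs with h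
        · exact h ▸ hx
        · exact this)
      (Nat.not_even_iff_odd.1 heven).add_one
    refine ⟨F, hFG, hF, fun w => ?_⟩
    have : (F.neighborSet w).ncard = a + if w = x then 1 else 0 := hdeg w
    split_ifs at this <;> omega
  by_cases hu : a + 1 ≤ deg G u
  · exact key huv hu
  by_cases hv : a + 1 ≤ deg G v
  · obtain ⟨F, hFG, hF, hdeg⟩ := key huv.symm hv
    exact ⟨F, hFG, hF.symm, hdeg⟩
  have := two_mul_deg_add_deg_le Gᶜ huv.ne
  have := deg_add_deg_compl G u
  have := deg_add_deg_compl G v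
  omega

end Covering

section Extremal

lemma two_mul_edgeCount {V : Type*} [Fintype V] (G : SimpleGraph V) :
    2 * edgeCount G = ∑ w, deg G w := by
  simp only [deg_eq_degree, G.sum_degrees_eq_twice_card_edges, edgeCount,
    Nat.card_eq_fintype_card, ← edgeFinset_card]

lemma edgeCount_congr {V W : Type*} [Fintype V] [Fintype W] {G : SimpleGraph V}
    {H : SimpleGraph W} (e : G ≃g H) : edgeCount G = edgeCount H :=
  Nat.card_congr e.mapEdgeSet

lemma sum_deg_compl_eq_iff {V : Type*} [Fintype V] (G : SimpleGraph V) (x : V) :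
    ∑ w, deg Gᶜ w = 2 * deg Gᶜ x ↔ ∀ w z, w ≠ x → z ≠ x → w ≠ z → G.Adj w z := by
  rw [← sum_deg_deleteIncidenceSet Gᶜ x, Nat.add_eq_right, Finset.sum_eq_zero_iff]
  simp only [deg, Set.ncard_eq_zero (Set.toFinite _), Set.eq_empty_iff_forall_notMem,
    mem_neighborSet, deleteIncidenceSet_adj, compl_adj, Finset.mem_univ, true_imp_iff]
  grind

/-- A graph which is complete outside of a single vertex is determined up to isomorphism by the
degree of that vertex. -/
lemma nonempty_iso_of_deg_eq {V W : Type*} [Fintype V] [Fintype W] {G : SimpleGraph V}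
    {H : SimpleGraph W} {x : V} {y : W} (hcard : Fintype.card V = Fintype.card W)
    (hG : ∀ w z, w ≠ x → z ≠ x → w ≠ z → G.Adj w z)
    (hH : ∀ w z, w ≠ y → z ≠ y → w ≠ z → H.Adj w z) (hdeg : deg G x = deg H y) :
    Nonempty (G ≃g H) := by
  have hdeg' : deg Gᶜ x = deg Hᶜ y := by
    have := deg_add_deg_compl G x
    have := deg_add_deg_compl H y
    omega
  let f : V → Fin 3 := fun w => if w = x then 0 else if G.Adj x w then 1 else 2
  let g : W → Fin 3 := fun w => if w = y then 0 else if H.Adj y w then 1 else 2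
  have hfiber : ∀ c, Nonempty ({w // f w = c} ≃ {w // g w = c}) := by
    intro c
    refine Finite.card_eq.1 ?_
    have h0 : Nat.card {w // f w = c} = {w | f w = c}.ncard := rfl
    have h1 : Nat.card {w // g w = c} = {w | g w = c}.ncard := rfl
    rw [h0, h1]
    fin_cases c
    · have e0 : {w | f w = 0} = {x} := by ext w; simp only [f]; grind
      have e1 : {w | g w = 0} = {y} := by ext w; simp only [g]; grind
      simp [e0, e1]
    · have e0 : {w | f w = 1} = G.neighborSet x := by
        ext w
        have := fun h : G.Adj x w => h.ne
        simp only [f, mem_neighborSet, Set.mem_ofPred_eq]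
        grind
      have e1 : {w | g w = 1} = H.neighborSet y := by
        ext w
        have := fun h : H.Adj y w => h.ne
        simp only [g, mem_neighborSet, Set.mem_ofPred_eq]
        grind
      simpa [e0, e1, deg] using hdeg
    · have e0 : {w | f w = 2} = Gᶜ.neighborSet x := by
        ext w
        simp only [f, mem_neighborSet, Set.mem_ofPred_eq, compl_adj]
        grind
      have e1 : {w | g w = 2} = Hᶜ.neighborSet y := by
        ext w
        simp only [g, mem_neighborSet, Set.mem_ofPred_eq, compl_adj]
        grind
      simpa [e0, e1, deg] using hdeg'
  let e : V ≃ W := Equiv.ofFiberEquiv fun c => (hfiber c).some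
  have he : ∀ w, g (e w) = f w := fun w => Equiv.ofFiberEquiv_map _ w
  have hx : ∀ w, e w = y ↔ w = x := fun w => by
    have := he w
    dsimp only [f, g] at this
    grind
  have hadj : ∀ w, H.Adj y (e w) ↔ G.Adj x w := fun w => by
    have hew := he w
    have := hx w
    have := fun h : H.Adj y (e w) => h.ne
    have := fun h : G.Adj x w => h.ne
    dsimp only [f, g] at hew
    grind
  refine ⟨⟨e, fun {w z} => ?_⟩⟩
  by_cases hw : w = x
  · rw [hw, (hx x).2 rfl, hadj]
  by_cases hz : z = x
  · rw [hz, (hx x).2 rfl, H.adj_comm, hadj, G.adj_comm]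
  have := hG w z hw hz
  have := hH (e w) (e z) (mt (hx w).1 hw) (mt (hx z).1 hz)
  have := e.injective.ne_iff (x := w) (y := z)
  have := fun h : H.Adj (e w) (e z) => h.ne
  have := fun h : G.Adj w z => h.ne
  change H.Adj (e w) (e z) ↔ G.Adj w z
  tauto

lemma Hgraph_adj_of_ne_zero {n a : ℕ} (h0 : 0 < n) (w z : Fin n) (hw : w ≠ ⟨0, h0⟩)
    (hz : z ≠ ⟨0, h0⟩) (hwz : w ≠ z) : (Hgraph n a).Adj w z := by
  rw [Hgraph, SimpleGraph.fromRel_adj]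
  rw [ne_eq, Fin.ext_iff] at hw hz
  exact ⟨hwz, Or.inl (Or.inl ⟨Nat.pos_of_ne_zero hw, Nat.pos_of_ne_zero hz⟩)⟩

lemma deg_Hgraph_zero {n a : ℕ} (h0 : 0 < n) (han : a < n) :
    deg (Hgraph n a) ⟨0, h0⟩ = a - 1 := by
  have : (Hgraph n a).neighborSet ⟨0, h0⟩ = (Finset.Ioo ⟨0, h0⟩ ⟨a, han⟩ : Finset (Fin n)) := by
    ext i
    rw [mem_neighborSet, Hgraph, SimpleGraph.fromRel_adj, Finset.coe_Ioo, Set.mem_Ioo,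
      Fin.lt_def, Fin.lt_def, ne_eq, Fin.ext_iff]
    dsimp only
    omega
  rw [deg, this, Set.ncard_coe_finset, Fin.card_Ioo]
  simp

lemma sum_deg_compl_Hgraph {n a : ℕ} (ha : 1 ≤ a) (han : a < n) :
    ∑ w, deg (Hgraph n a)ᶜ w + 2 * a = 2 * n := by
  have h0 : 0 < n := by omega
  rw [(sum_deg_compl_eq_iff (Hgraph n a) ⟨0, h0⟩).2 (Hgraph_adj_of_ne_zero h0)]
  have h1 := deg_add_deg_compl (Hgraph n a) ⟨0, h0⟩
  rw [deg_Hgraph_zero h0 han, Fintype.card_fin] at h1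
  omega

lemma two_mul_edgeCount_add {n a : ℕ} (ha : 1 ≤ a) (hn : 2 ≤ n) (G : SimpleGraph (Fin n)) :
    2 * edgeCount G + ∑ w, deg Gᶜ w + 2 * a = 2 * ((n - 1).choose 2 + (a - 1)) + 2 * n := by
  have h1 := sum_deg_add_sum_deg_compl G
  rw [← two_mul_edgeCount, Fintype.card_fin] at h1
  obtain ⟨k, rfl⟩ : ∃ k, n = k + 2 := ⟨n - 2, by omega⟩
  have h2 : (k + 2 - 1).choose 2 * 2 = (k + 1) * k := by
    rw [Nat.choose_two_right]
    exact Nat.div_mul_cancel (Nat.even_mul_pred_self (k + 1)).two_dvd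
  obtain ⟨c, rfl⟩ : ∃ c, a = c + 1 := ⟨a - 1, by omega⟩
  rw [Nat.add_sub_cancel]
  nlinarith

end Extremal

/-- For 1 ≤ a ≤ b, b ≥ 2, n ≥ 3a+4 (na even when a = b): any n-vertex graph that is
not [a,b]-covered has at most C(n-1,2) + a - 1 edges, with equality iff G ≅ H_{n,a}. -/
theorem size_extremal_non_abCovered {n a b : ℕ} (ha : 1 ≤ a) (hab : a ≤ b)
    (hb : 2 ≤ b) (hn : 3 * a + 4 ≤ n) (hpar : a = b → Even (n * a))
    (G : SimpleGraph (Fin n)) (h : ¬ IsABCovered G a b) :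
    edgeCount G ≤ (n - 1).choose 2 + (a - 1) ∧
      (edgeCount G = (n - 1).choose 2 + (a - 1) ↔ Nonempty (G ≃g Hgraph n a)) := by
  have hedge := two_mul_edgeCount_add ha (by omega) G
  have hiso : Nonempty (G ≃g Hgraph n a) → edgeCount G = (n - 1).choose 2 + (a - 1) := by
    rintro ⟨e⟩
    have h1 := two_mul_edgeCount_add ha (by omega) (Hgraph n a)
    rw [← edgeCount_congr e] at h1
    have h2 := sum_deg_compl_Hgraph (n := n) ha (by omega)
    omega
  by_cases hC : ∑ w, deg Gᶜ w + 2 * a ≤ 2 * n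
  · obtain ⟨x, hx⟩ : ∃ x, deg G x < a := by
      by_contra! hδ
      exact h (isABCovered_of_sum_deg_compl_le G ha hab hb (by simpa using hn)
        (by simpa using hpar) (by simpa using hC) hδ)
    have h1 := sum_deg_deleteIncidenceSet Gᶜ x
    have h2 := deg_add_deg_compl G x
    rw [Fintype.card_fin] at h2
    refine ⟨by omega, fun _ => ?_, hiso⟩
    refine nonempty_iso_of_deg_eq (y := ⟨0, by omega⟩) rfl
      ((sum_deg_compl_eq_iff G x).1 (by omega))
      (Hgraph_adj_of_ne_zero _) ?_
    rw [deg_Hgraph_zero _ (by omega)]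
    omega
  · exact ⟨by omega, fun h' => by omega, hiso⟩
end
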